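/- Let φ : 𝔻² → 𝔻² be holomorphic and C²-smooth on the closed bidisc, and let β > -1. Then the composition operator C_φ is bounded on the weighted Bergman space A²_β(𝔻²) if and only if for every ζ ∈ 𝕋² with φ(ζ) ∈ 𝕋², the complex derivative d_ζφ (the 2×2 complex Jacobian matrix at ζ) is invertible. -/

import Mathlib

open MeasureTheory Metric Set ENNReal

noncomputable section

/-- The open unit polydisc in `ℂⁿ`. -/
def polydisc (n : ℕ) : Set (Fin n → ℂ) := {z | ∀ j, ‖z j‖ < 1}

/-- The closed unit polydisc in `ℂⁿ`. -/
def closedPolydisc (n : ℕ) : Set (Fin n → ℂ) := {z | ∀ j, ‖z j‖ ≤ 1}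

/-- The distinguished boundary (torus) of the polydisc. -/
def torus (n : ℕ) : Set (Fin n → ℂ) := {z | ∀ j, ‖z j‖ = 1}

/-- The weighted Bergman measure `V_β` on the polydisc: the product of the measures
`dA_β(z) = (β+1)(1-|z|²)^β dA(z)`, where `dA` is normalized area measure on the unit disc. -/
def Vbeta (n : ℕ) (β : ℝ) : Measure (Fin n → ℂ) :=
  (volume.restrict (polydisc n)).withDensity
    (fun z => ENNReal.ofReal (∏ j, ((β + 1) * (1 - ‖z j‖ ^ 2) ^ β / Real.pi)))

/-- The `(i,j)` entry `∂Φ_i/∂z_j(ζ)` of the complex Jacobian matrix of `Φ` at `ζ`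
(computed via the derivative of the extension to the closed polydisc). -/
def jacEntry (n : ℕ) (Φ : (Fin n → ℂ) → (Fin n → ℂ)) (ζ : Fin n → ℂ) (i j : Fin n) : ℂ :=
  fderivWithin ℝ Φ (closedPolydisc n) ζ (Pi.single j 1) i

/-- The composition operator `C_Φ` is bounded on the weighted Bergman space `A²_β(𝔻ⁿ)`. -/
def bddBergman (n : ℕ) (β : ℝ) (Φ : (Fin n → ℂ) → (Fin n → ℂ)) : Prop :=
  ∃ C > (0:ℝ), ∀ f : (Fin n → ℂ) → ℂ, DifferentiableOn ℂ f (polydisc n) →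
    ∫⁻ z, ENNReal.ofReal (‖f (Φ z)‖ ^ 2) ∂(Vbeta n β) ≤
      ENNReal.ofReal C * ∫⁻ z, ENNReal.ofReal (‖f z‖ ^ 2) ∂(Vbeta n β)

open ComplexConjugate

lemma polydisc_eq_ball : polydisc 2 = ball (0 : Fin 2 → ℂ) 1 := by
  ext z; simp [polydisc, pi_norm_lt_iff]

lemma closedPolydisc_eq : closedPolydisc 2 = closedBall (0 : Fin 2 → ℂ) 1 := by
  ext z; simp [closedPolydisc, pi_norm_le_iff_of_nonneg]

/-- density of the one-dimensional weighted measure -/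
def wden (β : ℝ) (z : ℂ) : ℝ := (β + 1) * (1 - ‖z‖ ^ 2) ^ β / Real.pi

/-- one-dimensional weighted measure -/
def muB (β : ℝ) : Measure ℂ :=
  (volume.restrict (ball 0 1)).withDensity (fun z => ENNReal.ofReal (wden β z))

lemma measurable_wden (β : ℝ) : Measurable (wden β) := by
  unfold wden
  fun_prop

lemma wden_nonneg {β : ℝ} (hβ : -1 < β) {z : ℂ} (hz : z ∈ ball (0:ℂ) 1) : 0 ≤ wden β z := by
  have h1 : ‖z‖ < 1 := by simpa using hz
  have : 0 ≤ 1 - ‖z‖ ^ 2 := by nlinarith [norm_nonneg z]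
  have h2 : 0 ≤ β + 1 := by linarith
  unfold wden
  have := Real.pi_pos
  positivity

instance (β : ℝ) : SFinite (muB β) := by unfold muB; infer_instance

lemma Vbeta_mp (β : ℝ) (hβ : -1 < β) :
    MeasurePreserving (MeasurableEquiv.piFinTwo (fun _ => ℂ)) (Vbeta 2 β) ((muB β).prod (muB β)) := by
  have h1 : (muB β).prod (muB β) = ((volume : Measure (ℂ × ℂ)).restrict (ball 0 1 ×ˢ ball 0 1)).withDensity
      (fun z => ENNReal.ofReal (wden β z.1) * ENNReal.ofReal (wden β z.2)) := by
    unfold muB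
    rw [prod_withDensity (measurable_wden β).ennreal_ofReal (measurable_wden β).ennreal_ofReal,
      Measure.prod_restrict]
    rfl
  have h2 : Vbeta 2 β = ((volume : Measure (Fin 2 → ℂ)).restrict ((MeasurableEquiv.piFinTwo (fun _ => ℂ)) ⁻¹' (ball 0 1 ×ˢ ball 0 1))).withDensity
      ((fun z => ENNReal.ofReal (wden β z.1) * ENNReal.ofReal (wden β z.2)) ∘ (MeasurableEquiv.piFinTwo (fun _ => ℂ))) := by
    unfold Vbeta
    have hs : polydisc 2 = ((MeasurableEquiv.piFinTwo (fun _ => ℂ)) ⁻¹' (ball 0 1 ×ˢ ball 0 1)) := by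
      ext z; simp [polydisc, Fin.forall_fin_two]
    rw [← hs]
    refine withDensity_congr_ae ?_
    have hm : MeasurableSet (polydisc 2) := by rw [polydisc_eq_ball]; exact measurableSet_ball
    filter_upwards [ae_restrict_mem hm] with z hz
    have : 0 ≤ wden β (z 0) := wden_nonneg hβ (by simpa using hz 0)
    simp only [Function.comp, MeasurableEquiv.piFinTwo_apply]
    rw [← ENNReal.ofReal_mul this, Fin.prod_univ_two]
    rfl
  refine ⟨(MeasurableEquiv.piFinTwo (fun _ => ℂ)).measurable, ?_⟩
  rw [h1, h2]
  ext s hs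
  have hm := (measurable_wden β).ennreal_ofReal
  rw [Measure.map_apply (MeasurableEquiv.measurable _) hs, withDensity_apply _ hs,
    withDensity_apply _ ((MeasurableEquiv.measurable _) hs)]
  rw [Measure.restrict_restrict hs, Measure.restrict_restrict ((MeasurableEquiv.measurable _) hs),
    ← Set.preimage_inter]
  have := (volume_preserving_piFinTwo (fun _ : Fin 2 => ℂ)).setLIntegral_comp_preimage_emb
    (MeasurableEquiv.measurableEmbedding _)
    (fun z => ENNReal.ofReal (wden β z.1) * ENNReal.ofReal (wden β z.2)) (s ∩ ball 0 1 ×ˢ ball 0 1)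
  exact this

lemma muB_finite (β : ℝ) (hβ : -1 < β) : muB β univ < ∞ := by
  unfold muB
  rw [withDensity_apply _ MeasurableSet.univ, Measure.restrict_univ,
    ← lintegral_indicator measurableSet_ball, ← Complex.lintegral_comp_polarCoord_symm]
  have hm := measurable_wden β
  calc _ ≤ ∫⁻ p in Set.Ioo (0:ℝ) 1 ×ˢ Set.Ioo (-Real.pi) Real.pi,
        ENNReal.ofReal ((fun r : ℝ => (β + 1) / Real.pi * (r * (1 - r ^ 2) ^ β)) p.1) := by
        rw [← lintegral_indicator (measurableSet_Ioo.prod measurableSet_Ioo), ← lintegral_indicator]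
        · apply lintegral_mono
          intro p
          by_cases hp : p ∈ polarCoord.target
          · rw [Set.indicator_of_mem hp]
            simp only [polarCoord_target, mem_prod, mem_Ioi, mem_Ioo] at hp
            have hn : ‖Complex.polarCoord.symm p‖ = p.1 := by
              rw [Complex.norm_polarCoord_symm, abs_of_pos hp.1]
            by_cases h1 : p.1 < 1
            · rw [Set.indicator_of_mem (by rw [mem_ball_zero_iff, hn]; exact h1),
                Set.indicator_of_mem (by simp [hp, h1])]
              simp only [wden, hn, smul_eq_mul]
              rw [← ENNReal.ofReal_mul hp.1.le]
              apply le_of_eq; congr 1; ring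
            · rw [Set.indicator_of_notMem (s := ball 0 1) (by rw [mem_ball_zero_iff, hn]; exact h1)]
              simp
          · rw [Set.indicator_of_notMem hp]; exact bot_le
        · exact polarCoord.open_target.measurableSet
    _ < ∞ := by
        rw [Measure.volume_eq_prod, ← Measure.prod_restrict, lintegral_prod]
        · simp only [lintegral_const, Measure.restrict_apply, MeasurableSet.univ, univ_inter, Real.volume_Ioo]
          rw [lintegral_mul_const]
          · refine ENNReal.mul_lt_top ?_ ENNReal.ofReal_lt_top
            have hint : IntegrableOn (fun r : ℝ => (β + 1) / Real.pi * (r * (1 - r ^ 2) ^ β)) (Ioo 0 1) := by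
              refine Integrable.const_mul ?_ _
              have h0 := intervalIntegral.integrableOn_deriv_of_nonneg (g := fun r : ℝ => -(1 - r^2) ^ (β+1))
                (g' := fun r => 2 * (β+1) * (r * (1 - r ^ 2) ^ β)) (a := 0) (b := 1) ?_ ?_ ?_
              · have h00 : IntegrableOn _ (Ioo (0:ℝ) 1) volume := Integrable.const_mul (h0.mono_set Ioo_subset_Ioc_self) (2 * (β+1))⁻¹
                refine h00.congr_fun (fun r hr => ?_) measurableSet_Ioo
                have : β + 1 ≠ 0 := by linarith
                simp only
                field_simp
              · apply ContinuousOn.neg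
                apply ContinuousOn.rpow_const (by fun_prop)
                intro x hx; right; linarith
              · intro x hx
                have hx2 : 0 < 1 - x^2 := by nlinarith [hx.1, hx.2]
                have := (((hasDerivAt_id x).pow 2).const_sub 1).rpow_const (p := β+1) (Or.inl hx2.ne')
                refine HasDerivAt.congr_deriv this.neg ?_
                have e : β + 1 - 1 = β := by ring
                rw [e]
                simp only [id, Nat.cast_ofNat, Pi.pow_apply]
                ring
              · intro x hx
                have hx2 : 0 < 1 - x^2 := by nlinarith [hx.1, hx.2]
                have := hx.1
                have : 0 < β + 1 := by linarith
                positivity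
            exact hint.lintegral_lt_top
          · fun_prop
        · fun_prop

/-- disc involution -/
def mob (a u : ℂ) : ℂ := (a - u) / (1 - conj a * u)

lemma one_sub_conj_mul_ne {a u : ℂ} (ha : ‖a‖ < 1) (hu : ‖u‖ ≤ 1) : 1 - conj a * u ≠ 0 := by
  intro h
  have h1 : conj a * u = 1 := (sub_eq_zero.mp h).symm
  have : ‖a‖ * ‖u‖ = 1 := by rw [← RCLike.norm_conj a, ← norm_mul, h1, norm_one]
  nlinarith [norm_nonneg a, norm_nonneg u]

lemma mob_norm {a u : ℂ} (ha : ‖a‖ < 1) (hu : ‖u‖ ≤ 1) :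
    1 - ‖mob a u‖ ^ 2 = (1 - ‖a‖ ^ 2) * (1 - ‖u‖ ^ 2) / ‖1 - conj a * u‖ ^ 2 := by
  have h := one_sub_conj_mul_ne ha hu
  have hn : ‖1 - conj a * u‖ ^ 2 ≠ 0 := pow_ne_zero _ (norm_ne_zero_iff.mpr h)
  unfold mob
  rw [norm_div, div_pow, eq_div_iff hn, sub_mul, div_mul_cancel₀ _ hn]
  simp only [Complex.sq_norm, Complex.normSq_apply]
  simp
  ring

lemma mob_one_sub {a u : ℂ} (ha : ‖a‖ < 1) (hu : ‖u‖ ≤ 1) :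
    1 - conj a * mob a u = ((1 - ‖a‖ ^ 2 : ℝ) : ℂ) / (1 - conj a * u) := by
  have h := one_sub_conj_mul_ne ha hu
  unfold mob
  have : ((‖a‖ : ℝ) : ℂ) ^ 2 = conj a * a := by rw [mul_comm, Complex.mul_conj, Complex.normSq_eq_norm_sq]; push_cast; rfl
  push_cast
  rw [this]
  field_simp
  ring

lemma mob_mem {a u : ℂ} (ha : ‖a‖ < 1) (hu : ‖u‖ < 1) : ‖mob a u‖ < 1 := by
  have h := one_sub_conj_mul_ne ha hu.le
  have h1 := mob_norm ha hu.le
  have : 0 < 1 - ‖mob a u‖ ^ 2 := by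
    rw [h1]
    have e1 : 0 < 1 - ‖a‖ ^ 2 := by nlinarith [norm_nonneg a]
    have e2 : 0 < 1 - ‖u‖ ^ 2 := by nlinarith [norm_nonneg u]
    have : 0 < ‖1 - conj a * u‖ := norm_pos_iff.mpr h
    positivity
  nlinarith [norm_nonneg (mob a u)]

lemma mob_mob {a u : ℂ} (ha : ‖a‖ < 1) (hu : ‖u‖ < 1) : mob a (mob a u) = u := by
  have h := one_sub_conj_mul_ne ha hu.le
  have h2 := one_sub_conj_mul_ne ha (mob_mem ha hu).le
  have e : mob a (mob a u) = (a - mob a u) / (1 - conj a * mob a u) := rfl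
  have key : mob a u * (1 - conj a * u) = a - u := div_mul_cancel₀ _ h
  rw [e, div_eq_iff h2]
  apply mul_right_cancel₀ h
  linear_combination (-1 + u * conj a) * key

lemma mob_deriv {a u : ℂ} (ha : ‖a‖ < 1) (hu : ‖u‖ < 1) :
    HasDerivAt (mob a) (-((1 - ‖a‖ ^ 2 : ℝ) : ℂ) / (1 - conj a * u) ^ 2) u := by
  have h := one_sub_conj_mul_ne ha hu.le
  have h1 := ((hasDerivAt_id u).const_sub a).div (((hasDerivAt_id u).const_mul (conj a)).const_sub 1) h
  refine h1.congr_deriv ?_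
  have : ((‖a‖ : ℝ) : ℂ) ^ 2 = conj a * a := by rw [mul_comm, Complex.mul_conj, Complex.normSq_eq_norm_sq]; push_cast; rfl
  push_cast
  rw [this]
  simp
  ring

lemma lintegral_mob {a : ℂ} (ha : ‖a‖ < 1) (G : ℂ → ℝ≥0∞) :
    ∫⁻ w in ball 0 1, G w = ∫⁻ u in ball 0 1,
      ENNReal.ofReal ((1 - ‖a‖ ^ 2) ^ 2 / ‖1 - conj a * u‖ ^ 4) * G (mob a u) := by
  have him : mob a '' (ball 0 1) = ball 0 1 := by
    ext w; constructor
    · rintro ⟨u, hu, rfl⟩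
      simpa using mob_mem ha (by simpa using hu)
    · intro hw
      have hw : ‖w‖ < 1 := by simpa using hw
      exact ⟨mob a w, by simpa using mob_mem ha hw, mob_mob ha hw⟩
  have hinj : InjOn (mob a) (ball 0 1) := by
    intro u hu v hv h
    rw [← mob_mob ha (u := u) (by simpa using hu), h, mob_mob ha (by simpa using hv)]
  conv_lhs => rw [← him]
  rw [lintegral_image_eq_lintegral_abs_det_fderiv_mul volume measurableSet_ball
    (f' := fun u => (ContinuousLinearMap.toSpanSingleton ℂ (-((1 - ‖a‖ ^ 2 : ℝ) : ℂ) / (1 - conj a * u) ^ 2)).restrictScalars ℝ) ?_ hinj]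
  · refine setLIntegral_congr_fun measurableSet_ball (fun u hu => ?_)
    congr 2
    simp [ContinuousLinearMap.det, LinearMap.det_restrictScalars]
    simp [Algebra.norm_complex_apply, Complex.normSq_eq_norm_sq]
    have e : ‖((‖a‖ : ℝ) : ℂ) ^ 2 - 1‖ = 1 - ‖a‖ ^ 2 := by
      rw [show ((‖a‖ : ℝ) : ℂ) ^ 2 - 1 = ((‖a‖ ^ 2 - 1 : ℝ) : ℂ) by push_cast; rfl, Complex.norm_real,
        Real.norm_of_nonpos (by nlinarith [norm_nonneg a])]
      ring
    rw [e, abs_of_nonneg (by positivity), ← pow_mul]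
  · intro u hu
    have := (mob_deriv ha (u := u) (by simpa using hu)).hasFDerivAt.restrictScalars ℝ
    exact this.hasFDerivWithinAt

lemma forelli_rudin (β : ℝ) (hβ : -1 < β) (M : ℕ) (hM : β + 2 ≤ M) {a : ℂ} (ha : ‖a‖ < 1) :
    ∫⁻ w, ENNReal.ofReal ((‖1 - conj a * w‖ ^ (2 * M))⁻¹) ∂(muB β) ≤
      ENNReal.ofReal ((2:ℝ) ^ (2 * M - 2 * β - 4 : ℝ) * (1 - ‖a‖ ^ 2) ^ (β + 2 - 2 * M)) * muB β univ := by
  have hs : 0 < 1 - ‖a‖ ^ 2 := by nlinarith [norm_nonneg a]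
  unfold muB
  rw [lintegral_withDensity_eq_lintegral_mul _ (measurable_wden β).ennreal_ofReal (by fun_prop),
    lintegral_mob ha, withDensity_apply _ MeasurableSet.univ, Measure.restrict_univ,
    ← lintegral_const_mul _ (measurable_wden β).ennreal_ofReal]
  refine setLIntegral_mono' measurableSet_ball (fun u hu => ?_)
  have hu' : ‖u‖ < 1 := by simpa using hu
  have ht : 0 < 1 - ‖u‖ ^ 2 := by nlinarith [norm_nonneg u]
  have h := one_sub_conj_mul_ne ha hu'.le
  have hq : 0 < ‖1 - conj a * u‖ := norm_pos_iff.mpr h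
  have hq2 : ‖1 - conj a * u‖ ≤ 2 := by
    calc _ ≤ ‖(1:ℂ)‖ + ‖conj a * u‖ := norm_sub_le _ _
      _ ≤ 2 := by rw [norm_one, norm_mul, RCLike.norm_conj]; nlinarith [norm_nonneg a, norm_nonneg u]
  have hw0 : 0 ≤ wden β (mob a u) := wden_nonneg hβ (by simpa using mob_mem ha hu')
  simp only [Pi.mul_apply]
  rw [← ENNReal.ofReal_mul hw0, ← ENNReal.ofReal_mul (by positivity), ← ENNReal.ofReal_mul (by positivity)]
  apply ENNReal.ofReal_le_ofReal
  unfold wden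
  rw [mob_norm ha hu'.le, mob_one_sub ha hu'.le, norm_div, Complex.norm_real, Real.norm_of_nonneg hs.le]
  generalize (1 - ‖a‖ ^ 2) = s at *
  generalize (1 - ‖u‖ ^ 2) = t at *
  generalize ‖1 - conj a * u‖ = q at *
  have e1 : (s * t / q ^ 2) ^ β = s ^ β * t ^ β * q ^ (-(2 * β)) := by
    rw [Real.div_rpow (by positivity) (by positivity), Real.mul_rpow hs.le ht.le, Real.rpow_neg hq.le,
      div_eq_mul_inv, Real.rpow_mul hq.le, Real.rpow_two]
  have e2 : ((s / q) ^ (2 * M))⁻¹ = s ^ (-(2 * M : ℝ)) * q ^ (2 * M : ℝ) := by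
    rw [div_pow, inv_div, Real.rpow_neg hs.le]
    have : (2 * (M:ℝ)) = ((2 * M : ℕ) : ℝ) := by push_cast; rfl
    rw [this, Real.rpow_natCast, Real.rpow_natCast]
    ring
  have e3 : s ^ 2 / q ^ 4 = s ^ (2 : ℝ) * q ^ (-4 : ℝ) := by
    rw [Real.rpow_neg hq.le]; norm_cast
  have e4 : s ^ (β + 2 - 2 * (M:ℝ)) = s ^ β * s ^ (2:ℝ) * s ^ (-(2 * M : ℝ)) := by
    rw [← Real.rpow_add hs, ← Real.rpow_add hs]; congr 1
  have e5 : q ^ (2 * M - 2 * β - 4 : ℝ) = q ^ (2 * M : ℝ) * q ^ (-(2 * β)) * q ^ (-4:ℝ) := by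
    rw [← Real.rpow_add hq, ← Real.rpow_add hq]; congr 1
  have e6 : q ^ (2 * M - 2 * β - 4 : ℝ) ≤ 2 ^ (2 * M - 2 * β - 4 : ℝ) :=
    Real.rpow_le_rpow hq.le hq2 (by linarith)
  rw [e1, e2, e3]
  have : 0 < β + 1 := by linarith
  have hpi := Real.pi_pos
  calc _ = q ^ (2 * M - 2 * β - 4 : ℝ) * (s ^ (β + 2 - 2 * (M:ℝ)) * ((β + 1) * t ^ β / Real.pi)) := by
        rw [e4, e5]; ring
    _ ≤ 2 ^ (2 * M - 2 * β - 4 : ℝ) * (s ^ (β + 2 - 2 * (M:ℝ)) * ((β + 1) * t ^ β / Real.pi)) := by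
        gcongr
    _ = _ := by ring

lemma exists_unit_dir (x : ℂ) (hx : ‖x‖ < 1) : ∃ η : ℂ, ‖η‖ = 1 ∧ ‖η - x‖ = 1 - ‖x‖ := by
  by_cases h : x = 0
  · exact ⟨1, by simp, by simp [h]⟩
  · have hn : ‖x‖ ≠ 0 := norm_ne_zero_iff.mpr h
    have h1 : ‖((‖x‖⁻¹ : ℝ) : ℂ) * x‖ = 1 := by
      rw [norm_mul, Complex.norm_real, norm_inv, norm_norm, inv_mul_cancel₀ hn]
    refine ⟨((‖x‖⁻¹ : ℝ) : ℂ) * x, h1, ?_⟩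
    have : ((‖x‖⁻¹ : ℝ) : ℂ) * x - x = ((1 - ‖x‖ : ℝ) : ℂ) * (((‖x‖⁻¹ : ℝ) : ℂ) * x) := by
      have : ((‖x‖:ℝ) : ℂ) ≠ 0 := by exact_mod_cast hn
      push_cast; field_simp
    rw [this, norm_mul, h1, Complex.norm_real, Real.norm_of_nonneg (by linarith), mul_one]

lemma muB_ae (β : ℝ) : ∀ᵐ w ∂(muB β), ‖w‖ < 1 := by
  unfold muB
  apply (withDensity_absolutelyContinuous _ _).ae_le
  filter_upwards [ae_restrict_mem measurableSet_ball] with w hw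
  simpa using hw

lemma measurableSet_box (x : ℂ) (d : ℝ) : MeasurableSet {z : ℂ | ‖z - x‖ ≤ d ∧ 1 - ‖z‖ ≤ d} := by
  apply IsClosed.measurableSet
  have h1 : IsClosed {z : ℂ | ‖z - x‖ ≤ d} := isClosed_le (by fun_prop) (by fun_prop)
  have h2 : IsClosed {z : ℂ | 1 - ‖z‖ ≤ d} := isClosed_le (by fun_prop) (by fun_prop)
  exact h1.inter h2

lemma muB_box (β : ℝ) (hβ : -1 < β) : ∃ C : ℝ, 0 ≤ C ∧ ∀ x : ℂ, ‖x‖ < 1 → ∀ d : ℝ, 0 < d →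
    muB β {z | ‖z - x‖ ≤ d ∧ 1 - ‖z‖ ≤ d} ≤ ENNReal.ofReal (C * d ^ (β + 2)) := by
  obtain ⟨M, hM⟩ := exists_nat_ge (β + 2)
  set L := (muB β univ).toReal with hL
  have hLe : muB β univ = ENNReal.ofReal L := (ENNReal.ofReal_toReal (muB_finite β hβ).ne).symm
  have hL0 : 0 ≤ L := ENNReal.toReal_nonneg
  set K : ℝ := 4 ^ (2 * M) * (2:ℝ) ^ (2 * M - 2 * β - 4 : ℝ) with hK
  have hK0 : 0 ≤ K := by positivity
  refine ⟨L + K * L, by positivity, fun x hx d hd => ?_⟩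
  have hdp : 0 < d ^ (β + 2) := Real.rpow_pos_of_pos hd _
  by_cases hd1 : 1 ≤ d
  · calc _ ≤ muB β univ := measure_mono (subset_univ _)
      _ = ENNReal.ofReal L := hLe
      _ ≤ _ := by
        apply ENNReal.ofReal_le_ofReal
        have : 1 ≤ d ^ (β + 2) := Real.one_le_rpow hd1 (by linarith)
        nlinarith [mul_nonneg hK0 hL0]
  push Not at hd1
  obtain ⟨η, hη, hηx⟩ := exists_unit_dir x hx
  set a : ℂ := ((1 - d : ℝ) : ℂ) * η with ha
  have han : ‖a‖ = 1 - d := by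
    rw [ha, norm_mul, hη, Complex.norm_real, Real.norm_of_nonneg (by linarith), mul_one]
  have ha1 : ‖a‖ < 1 := by linarith
  have hmS : MeasurableSet {z : ℂ | ‖z - x‖ ≤ d ∧ 1 - ‖z‖ ≤ d} := measurableSet_box _ _
  rw [← lintegral_indicator_one hmS]
  calc _ ≤ ∫⁻ w, ENNReal.ofReal ((4 * d) ^ (2 * M)) *
        ENNReal.ofReal ((‖1 - conj a * w‖ ^ (2 * M))⁻¹) ∂(muB β) := by
        apply lintegral_mono_ae
        filter_upwards [muB_ae β] with w hw
        by_cases hwS : w ∈ {z : ℂ | ‖z - x‖ ≤ d ∧ 1 - ‖z‖ ≤ d}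
        · rw [Set.indicator_of_mem hwS]
          obtain ⟨h1, h2⟩ := hwS
          have hpos : 0 < ‖1 - conj a * w‖ := norm_pos_iff.mpr (one_sub_conj_mul_ne ha1 hw.le)
          have hle : ‖1 - conj a * w‖ ≤ 4 * d := by
            have e0 : 1 - conj a * w = conj η * ((η - x) - (w - x) + (d : ℂ) * w) := by
              have : conj η * η = 1 := by
                rw [mul_comm, Complex.mul_conj, Complex.normSq_eq_norm_sq, hη]; simp
              rw [ha]; simp only [map_mul, Complex.conj_ofReal]; push_cast
              linear_combination -this
            rw [e0, norm_mul, RCLike.norm_conj, hη, one_mul]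
            have i1 := norm_add_le ((η - x) - (w - x)) ((d : ℂ) * w)
            have i2 := norm_sub_le (η - x) (w - x)
            have i3 : ‖(d : ℂ) * w‖ ≤ d := by
              rw [norm_mul, Complex.norm_real, Real.norm_of_nonneg hd.le]; nlinarith
            have i4 : ‖w‖ ≤ ‖w - x‖ + ‖x‖ := by simpa using norm_add_le (w - x) x
            linarith
          rw [← ENNReal.ofReal_mul (by positivity)]
          simp only [Pi.one_apply]
          rw [← ENNReal.ofReal_one]
          apply ENNReal.ofReal_le_ofReal
          rw [← div_eq_mul_inv, one_le_div (by positivity)]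
          gcongr
        · rw [Set.indicator_of_notMem hwS]; exact bot_le
    _ ≤ ENNReal.ofReal ((4 * d) ^ (2 * M)) * (ENNReal.ofReal ((2:ℝ) ^ (2 * M - 2 * β - 4 : ℝ) * (1 - ‖a‖ ^ 2) ^ (β + 2 - 2 * M)) * muB β univ) := by
        rw [lintegral_const_mul _ (by fun_prop)]
        gcongr
        exact forelli_rudin β hβ M hM ha1
    _ ≤ _ := by
        rw [hLe, ← ENNReal.ofReal_mul (by rw [han]; have : 0 < 1 - (1-d)^2 := by nlinarith
                                          positivity), ← ENNReal.ofReal_mul (by positivity)]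
        apply ENNReal.ofReal_le_ofReal
        have e1 : (1 - ‖a‖ ^ 2) ^ (β + 2 - 2 * M) ≤ d ^ (β + 2 - 2 * M) := by
          apply Real.rpow_le_rpow_of_nonpos hd
          · rw [han]; nlinarith
          · linarith
        have e2 : d ^ (2 * M) * d ^ (β + 2 - 2 * M) = d ^ (β + 2) := by
          rw [← Real.rpow_natCast, ← Real.rpow_add hd]; congr 1; push_cast; ring
        calc _ ≤ (4 * d) ^ (2 * M) * (2 ^ (2 * M - 2 * β - 4 : ℝ) * d ^ (β + 2 - 2 * M) * L) := by gcongr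
          _ = K * L * (d ^ (2 * M) * d ^ (β + 2 - 2 * M)) := by rw [hK, mul_pow]; ring
          _ ≤ _ := by rw [e2]; nlinarith

lemma Vbeta_box (β : ℝ) (hβ : -1 < β) : ∃ C : ℝ, 0 ≤ C ∧ ∀ S ⊆ polydisc 2, MeasurableSet S →
    ∀ j k : Fin 2, j ≠ k → ∀ d₁ d₂ : ℝ, 0 < d₁ → 0 < d₂ →
    (∀ z ∈ S, ∀ z' ∈ S, z k = z' k → ‖z j - z' j‖ ≤ d₁) → (∀ z ∈ S, 1 - ‖z j‖ ≤ d₁) →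
    (∀ z ∈ S, ∀ z' ∈ S, ‖z k - z' k‖ ≤ d₂) → (∀ z ∈ S, 1 - ‖z k‖ ≤ d₂) →
    Vbeta 2 β S ≤ ENNReal.ofReal (C * (d₁ ^ (β + 2) * d₂ ^ (β + 2))) := by
  obtain ⟨C, hC, hbox⟩ := muB_box β hβ
  refine ⟨C * C, by positivity, fun S hS hSm j k hjk d₁ d₂ hd₁ hd₂ h1 h2 h3 h4 => ?_⟩
  rcases S.eq_empty_or_nonempty with rfl | ⟨z0, hz0⟩
  · simp
  -- key slicing estimate
  have key : ∀ P : ℂ → ℂ → Prop, (∀ y x y' x', P y x → P y' x' → ‖y - y'‖ ≤ d₂) →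
      (∀ y x, P y x → 1 - ‖y‖ ≤ d₂) → (∀ y x x', P y x → P y x' → ‖x - x'‖ ≤ d₁) →
      (∀ y x, P y x → 1 - ‖x‖ ≤ d₁) → (∀ y x, P y x → ‖y‖ < 1 ∧ ‖x‖ < 1) → (∃ y x, P y x) →
      ∫⁻ y, muB β {x | P y x} ∂(muB β) ≤ ENNReal.ofReal (C * C * (d₁ ^ (β + 2) * d₂ ^ (β + 2))) := by
    intro P p1 p2 p3 p4 p5 ⟨y0, x0, p6⟩
    set B : Set ℂ := {z | ‖z - y0‖ ≤ d₂ ∧ 1 - ‖z‖ ≤ d₂} with hB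
    have hmB : MeasurableSet B := measurableSet_box _ _
    calc _ ≤ ∫⁻ y, B.indicator (fun _ => ENNReal.ofReal (C * d₁ ^ (β + 2))) y ∂(muB β) := by
          apply lintegral_mono
          intro y
          rcases ({x | P y x} : Set ℂ).eq_empty_or_nonempty with he | ⟨x, hx⟩
          · simp [he]
          · have hyB : y ∈ B := ⟨p1 _ _ _ _ hx p6, p2 _ _ hx⟩
            rw [Set.indicator_of_mem hyB]
            refine le_trans (measure_mono ?_) (hbox x (p5 _ _ hx).2 d₁ hd₁)
            intro x' hx'
            exact ⟨p3 _ _ _ hx' hx, p4 _ _ hx'⟩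
      _ = ENNReal.ofReal (C * d₁ ^ (β + 2)) * muB β B := by
          rw [lintegral_indicator_const hmB]
      _ ≤ ENNReal.ofReal (C * d₁ ^ (β + 2)) * ENNReal.ofReal (C * d₂ ^ (β + 2)) := by
          gcongr
          exact hbox y0 (p5 _ _ p6).1 d₂ hd₂
      _ = _ := by
          rw [← ENNReal.ofReal_mul (by positivity)]; congr 1; ring
  have hmp := Vbeta_mp β hβ
  have hmp' := hmp.symm
  set e := MeasurableEquiv.piFinTwo (fun _ : Fin 2 => ℂ) with he
  have hV : Vbeta 2 β S = ((muB β).prod (muB β)) (e.symm ⁻¹' S) :=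
    (hmp'.measure_preimage_equiv S).symm
  have hmS' : MeasurableSet (e.symm ⁻¹' S) := e.symm.measurable hSm
  have hes : ∀ p : ℂ × ℂ, ∀ v : Fin 2 → ℂ, v = e.symm p → v 0 = p.1 ∧ v 1 = p.2 := by
    rintro p v rfl
    have : e (e.symm p) = p := e.apply_symm_apply p
    exact ⟨congrArg Prod.fst this, congrArg Prod.snd this⟩
  have hz0' : e.symm (z0 0, z0 1) = z0 := e.symm_apply_apply z0
  rw [hV]
  fin_cases j <;> fin_cases k <;> simp only [ne_eq, not_true_eq_false, Fin.zero_eta, Fin.mk_one, Fin.isValue, not_false_eq_true] at *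
  · rw [Measure.prod_apply_symm hmS']
    refine key (fun y x => e.symm (x, y) ∈ S) ?_ ?_ ?_ ?_ ?_ ⟨z0 1, z0 0, by rw [hz0']; exact hz0⟩
    · intro y x y' x' h h'
      simpa [hes _ _ rfl] using h3 _ h _ h'
    · intro y x h
      simpa [hes _ _ rfl] using h4 _ h
    · intro y x x' h h'
      simpa [hes _ _ rfl] using h1 _ h _ h' 
    · intro y x h
      simpa [hes _ _ rfl] using h2 _ h
    · intro y x h
      have := hS h
      exact ⟨by simpa [hes _ _ rfl] using this 1, by simpa [hes _ _ rfl] using this 0⟩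
  · rw [Measure.prod_apply hmS']
    refine key (fun y x => e.symm (y, x) ∈ S) ?_ ?_ ?_ ?_ ?_ ⟨z0 0, z0 1, by rw [hz0']; exact hz0⟩
    · intro y x y' x' h h'
      simpa [hes _ _ rfl] using h3 _ h _ h'
    · intro y x h
      simpa [hes _ _ rfl] using h4 _ h
    · intro y x x' h h'
      simpa [hes _ _ rfl] using h1 _ h _ h' 
    · intro y x h
      simpa [hes _ _ rfl] using h2 _ h
    · intro y x h
      have := hS h
      exact ⟨by simpa [hes _ _ rfl] using this 0, by simpa [hes _ _ rfl] using this 1⟩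

lemma convex_Q : Convex ℝ (closedPolydisc 2) := by
  rw [closedPolydisc_eq]; exact convex_closedBall _ _

lemma uniqueDiff_Q : UniqueDiffOn ℝ (closedPolydisc 2) := by
  apply uniqueDiffOn_convex convex_Q
  rw [closedPolydisc_eq, interior_closedBall _ one_ne_zero]
  exact ⟨0, by simp⟩

lemma subset_Q : polydisc 2 ⊆ closedPolydisc 2 := fun _ hz j => (hz j).le

lemma Q_subset_closure : closedPolydisc 2 ⊆ closure (polydisc 2) := by
  rw [closedPolydisc_eq, polydisc_eq_ball, closure_ball _ one_ne_zero]

section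
variable {φ : (Fin 2 → ℂ) → (Fin 2 → ℂ)}

lemma map_Q (hsm : ContDiffOn ℝ 2 φ (closedPolydisc 2))
    (hmap : ∀ z ∈ polydisc 2, φ z ∈ polydisc 2) : ∀ z ∈ closedPolydisc 2, φ z ∈ closedPolydisc 2 := by
  intro z hz
  have h1 : z ∈ closure (polydisc 2) := Q_subset_closure hz
  have h2 : ContinuousWithinAt φ (polydisc 2) z := (hsm.continuousOn z hz).mono subset_Q
  have h3 := h2.mem_closure h1 (t := closedPolydisc 2) (fun z hz => subset_Q (hmap z hz))
  rwa [closedPolydisc_eq, isClosed_closedBall.closure_eq, ← closedPolydisc_eq] at h3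

lemma hasD (hsm : ContDiffOn ℝ 2 φ (closedPolydisc 2)) {ζ : Fin 2 → ℂ} (hζ : ζ ∈ closedPolydisc 2) :
    HasFDerivWithinAt φ (fderivWithin ℝ φ (closedPolydisc 2) ζ) (closedPolydisc 2) ζ :=
  (hsm.differentiableOn (by norm_num) ζ hζ).hasFDerivWithinAt

lemma contD (hsm : ContDiffOn ℝ 2 φ (closedPolydisc 2)) :
    ContinuousOn (fderivWithin ℝ φ (closedPolydisc 2)) (closedPolydisc 2) :=
  hsm.continuousOn_fderivWithin uniqueDiff_Q (by norm_num)

lemma strict_est (hsm : ContDiffOn ℝ 2 φ (closedPolydisc 2)) {ζ : Fin 2 → ℂ}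
    (hζ : ζ ∈ closedPolydisc 2) {ε : ℝ} (hε : 0 < ε) :
    ∃ r > 0, ∀ z ∈ closedPolydisc 2, ∀ z' ∈ closedPolydisc 2, ‖z - ζ‖ < r → ‖z' - ζ‖ < r →
      ‖φ z - φ z' - fderivWithin ℝ φ (closedPolydisc 2) ζ (z - z')‖ ≤ ε * ‖z - z'‖ := by
  obtain ⟨r, hr, h⟩ := Metric.continuousWithinAt_iff.mp (contD hsm ζ hζ) ε hε
  refine ⟨r, hr, fun z hz z' hz' h1 h2 => ?_⟩
  have hc : Convex ℝ (closedPolydisc 2 ∩ ball ζ r) := convex_Q.inter (convex_ball _ _)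
  refine hc.norm_image_sub_le_of_norm_hasFDerivWithin_le' (f := φ)
    (f' := fderivWithin ℝ φ (closedPolydisc 2)) (fun x hx => (hasD hsm hx.1).mono inter_subset_left)
    (fun x hx => ?_) ⟨hz', by simpa [dist_eq_norm] using h2⟩ ⟨hz, by simpa [dist_eq_norm] using h1⟩
  rw [← dist_eq_norm]
  exact (h hx.1 hx.2).le

lemma quad_est (hsm : ContDiffOn ℝ 2 φ (closedPolydisc 2)) {ζ : Fin 2 → ℂ}
    (hζ : ζ ∈ closedPolydisc 2) :
    ∃ K ≥ 0, ∀ z ∈ closedPolydisc 2,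
      ‖φ z - φ ζ - fderivWithin ℝ φ (closedPolydisc 2) ζ (z - ζ)‖ ≤ K * ‖z - ζ‖ ^ 2 := by
  have hcd : ContDiffOn ℝ 1 (fderivWithin ℝ φ (closedPolydisc 2)) (closedPolydisc 2) :=
    hsm.fderivWithin uniqueDiff_Q (by norm_num)
  have hcompact : IsCompact (closedPolydisc 2) := by
    rw [closedPolydisc_eq]; exact isCompact_closedBall _ _
  have hcc := hcd.continuousOn_fderivWithin uniqueDiff_Q le_rfl
  obtain ⟨K, hK⟩ := hcompact.exists_bound_of_continuousOn hcc
  have hK0 : 0 ≤ K := (norm_nonneg _).trans (hK ζ hζ)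
  refine ⟨K, hK0, fun z hz => ?_⟩
  have hc : Convex ℝ (closedPolydisc 2 ∩ closedBall ζ ‖z - ζ‖) := convex_Q.inter (convex_closedBall _ _)
  rw [pow_two, ← mul_assoc]
  refine hc.norm_image_sub_le_of_norm_hasFDerivWithin_le' (f := φ)
    (f' := fderivWithin ℝ φ (closedPolydisc 2)) (fun x hx => (hasD hsm hx.1).mono inter_subset_left)
    (fun x hx => ?_) ⟨hζ, by simp⟩ ⟨hz, by simp [dist_eq_norm]⟩
  have h1 := convex_Q.norm_image_sub_le_of_norm_fderivWithin_le (𝕜 := ℝ) (hcd.differentiableOn one_ne_zero) hK hζ hx.1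
  refine h1.trans ?_
  gcongr
  simpa [dist_eq_norm] using hx.2

lemma D_smul (hhol : DifferentiableOn ℂ φ (polydisc 2)) (hsm : ContDiffOn ℝ 2 φ (closedPolydisc 2))
    {ζ : Fin 2 → ℂ} (hζ : ζ ∈ closedPolydisc 2) (c : ℂ) (h : Fin 2 → ℂ) :
    fderivWithin ℝ φ (closedPolydisc 2) ζ (c • h) = c • fderivWithin ℝ φ (closedPolydisc 2) ζ h := by
  have hcl := contD hsm
  have : EqOn (fun ζ => fderivWithin ℝ φ (closedPolydisc 2) ζ (c • h))
      (fun ζ => c • fderivWithin ℝ φ (closedPolydisc 2) ζ h) (closedPolydisc 2) := by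
    refine EqOn.of_subset_closure (s := polydisc 2) ?_ (hcl.clm_apply continuousOn_const)
      ((hcl.clm_apply continuousOn_const).const_smul c) subset_Q Q_subset_closure
    intro z hz
    have hopen : IsOpen (polydisc 2) := by rw [polydisc_eq_ball]; exact isOpen_ball
    have hd : HasFDerivAt φ (fderiv ℂ φ z) z := (hhol.differentiableAt (hopen.mem_nhds hz)).hasFDerivAt
    have h1 : fderivWithin ℝ φ (closedPolydisc 2) z = (fderiv ℂ φ z).restrictScalars ℝ :=
      (hd.restrictScalars ℝ).hasFDerivWithinAt.fderivWithin (uniqueDiff_Q z (subset_Q hz))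
    simp [h1]
  exact this hζ

lemma D_apply (hhol : DifferentiableOn ℂ φ (polydisc 2)) (hsm : ContDiffOn ℝ 2 φ (closedPolydisc 2))
    {ζ : Fin 2 → ℂ} (hζ : ζ ∈ closedPolydisc 2) (h : Fin 2 → ℂ) (i : Fin 2) :
    fderivWithin ℝ φ (closedPolydisc 2) ζ h i = ∑ j, jacEntry 2 φ ζ i j * h j := by
  have e : h = h 0 • (Pi.single 0 1 : Fin 2 → ℂ) + h 1 • (Pi.single 1 1 : Fin 2 → ℂ) := by
    ext k; fin_cases k <;> simp
  conv_lhs => rw [e]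
  rw [map_add, D_smul hhol hsm hζ, D_smul hhol hsm hζ]
  simp [jacEntry, mul_comm]

lemma D_single (hhol : DifferentiableOn ℂ φ (polydisc 2)) (hsm : ContDiffOn ℝ 2 φ (closedPolydisc 2))
    {ζ : Fin 2 → ℂ} (hζ : ζ ∈ closedPolydisc 2) (h : Fin 2 → ℂ) (i j : Fin 2) (hj : ∀ k, k ≠ j → h k = 0) :
    fderivWithin ℝ φ (closedPolydisc 2) ζ h i = jacEntry 2 φ ζ i j * h j := by
  rw [D_apply hhol hsm hζ, Finset.sum_eq_single j]
  · intro k _ hk; rw [hj k hk, mul_zero]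
  · simp

/-- the basic boundary inequality -/
lemma bdry_ineq (hhol : DifferentiableOn ℂ φ (polydisc 2)) (hsm : ContDiffOn ℝ 2 φ (closedPolydisc 2))
    (hmap : ∀ z ∈ polydisc 2, φ z ∈ polydisc 2)
    {ζ : Fin 2 → ℂ} (hζ : ζ ∈ closedPolydisc 2) (i j : Fin 2) (hi : ‖φ ζ i‖ = 1) :
    ‖jacEntry 2 φ ζ i j‖ ≤ (conj (φ ζ i) * jacEntry 2 φ ζ i j * ζ j).re := by
  set b : ℂ := conj (φ ζ i) * jacEntry 2 φ ζ i j with hb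
  have hbn : ‖b‖ = ‖jacEntry 2 φ ζ i j‖ := by rw [hb, norm_mul, RCLike.norm_conj, hi, one_mul]
  rw [← hbn]
  by_cases hb0 : b = 0
  · simp [hb0]
  have hbn0 : ‖b‖ ≠ 0 := norm_ne_zero_iff.mpr hb0
  set ω : ℂ := conj b * ((‖b‖⁻¹ : ℝ) : ℂ) with hω
  have hωn : ‖ω‖ = 1 := by
    rw [hω, norm_mul, RCLike.norm_conj, Complex.norm_real, norm_inv, norm_norm, mul_inv_cancel₀ hbn0]
  have hbω : b * ω = (‖b‖ : ℂ) := by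
    rw [hω, ← mul_assoc, Complex.mul_conj, Complex.normSq_eq_norm_sq, ← Complex.ofReal_mul]
    congr 1; field_simp
  set y : Fin 2 → ℂ := Function.update ζ j ω with hy
  have hyQ : y ∈ closedPolydisc 2 := by
    intro k
    by_cases hk : k = j
    · subst hk; simp [hy, hωn]
    · simpa [hy, hk] using hζ k
  have hder : HasFDerivWithinAt (fun z => (conj (φ ζ i) * φ z i).re)
      (Complex.reCLM ∘L ((ContinuousLinearMap.mul ℝ ℂ (conj (φ ζ i))) ∘L
        (ContinuousLinearMap.proj (R := ℝ) i ∘L fderivWithin ℝ φ (closedPolydisc 2) ζ)))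
      (closedPolydisc 2) ζ :=
    Complex.reCLM.hasFDerivAt.comp_hasFDerivWithinAt ζ
      ((ContinuousLinearMap.mul ℝ ℂ (conj (φ ζ i))).hasFDerivAt.comp_hasFDerivWithinAt ζ
        ((ContinuousLinearMap.proj (R := ℝ) (φ := fun _ : Fin 2 => ℂ) i).hasFDerivAt.comp_hasFDerivWithinAt ζ (hasD hsm hζ)))
  have hmax : IsLocalMaxOn (fun z => (conj (φ ζ i) * φ z i).re) (closedPolydisc 2) ζ := by
    apply IsMaxOn.localize
    intro z hz
    have h1 : (conj (φ ζ i) * φ ζ i).re = 1 := by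
      rw [mul_comm, Complex.mul_conj, Complex.normSq_eq_norm_sq, hi]; simp
    have h2 : (conj (φ ζ i) * φ z i).re ≤ 1 := by
      refine (Complex.re_le_norm _).trans ?_
      rw [norm_mul, RCLike.norm_conj, hi, one_mul]
      exact map_Q hsm hmap z hz i
    simp only [mem_ofPred_eq]
    rw [h1]; exact h2
  have := hmax.hasFDerivWithinAt_nonpos hder
    (sub_mem_posTangentConeAt_of_segment_subset (convex_Q.segment_subset hζ hyQ))
  simp only [ContinuousLinearMap.comp_apply, ContinuousLinearMap.proj_apply,
    ContinuousLinearMap.mul_apply', Complex.reCLM_apply] at this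
  rw [D_single hhol hsm hζ (y - ζ) i j (by intro k hk; simp [hy, hk]), ← mul_assoc, ← hb] at this
  simp only [Pi.sub_apply, hy, Function.update_self, mul_sub, hbω, Complex.sub_re, Complex.ofReal_re] at this
  linarith

end

section
variable {φ : (Fin 2 → ℂ) → (Fin 2 → ℂ)}

lemma bdry_real (hhol : DifferentiableOn ℂ φ (polydisc 2)) (hsm : ContDiffOn ℝ 2 φ (closedPolydisc 2))
    (hmap : ∀ z ∈ polydisc 2, φ z ∈ polydisc 2)
    {ζ : Fin 2 → ℂ} (hζ : ζ ∈ closedPolydisc 2) (i j : Fin 2) (hi : ‖φ ζ i‖ = 1) :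
    conj (φ ζ i) * jacEntry 2 φ ζ i j * ζ j = (‖jacEntry 2 φ ζ i j‖ : ℂ) := by
  have h := bdry_ineq hhol hsm hmap hζ i j hi
  set w := conj (φ ζ i) * jacEntry 2 φ ζ i j * ζ j with hw
  have hn : ‖w‖ ≤ ‖jacEntry 2 φ ζ i j‖ := by
    rw [hw, norm_mul, norm_mul, RCLike.norm_conj, hi, one_mul]
    have := hζ j
    nlinarith [norm_nonneg (jacEntry 2 φ ζ i j)]
  have h2 : w.re ≤ ‖w‖ := Complex.re_le_norm w
  have h3 : ‖w‖ ^ 2 = w.re ^ 2 + w.im ^ 2 := by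
    rw [Complex.sq_norm, Complex.normSq_apply]; ring
  have h4 : w.re = ‖jacEntry 2 φ ζ i j‖ := by linarith
  have h5 : w.im = 0 := by
    have : ‖w‖ = w.re := by linarith
    rw [this] at h3
    have : w.im ^ 2 = 0 := by linarith
    exact pow_eq_zero_iff (two_ne_zero) |>.mp this
  apply Complex.ext <;> simp [h4, h5]

lemma bdry_unit (hhol : DifferentiableOn ℂ φ (polydisc 2)) (hsm : ContDiffOn ℝ 2 φ (closedPolydisc 2))
    (hmap : ∀ z ∈ polydisc 2, φ z ∈ polydisc 2)
    {ζ : Fin 2 → ℂ} (hζ : ζ ∈ closedPolydisc 2) (i j : Fin 2) (hi : ‖φ ζ i‖ = 1)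
    (hJ : jacEntry 2 φ ζ i j ≠ 0) : ‖ζ j‖ = 1 := by
  have h := congrArg norm (bdry_real hhol hsm hmap hζ i j hi)
  rw [norm_mul, norm_mul, RCLike.norm_conj, hi, one_mul, Complex.norm_real, norm_norm] at h
  have := norm_ne_zero_iff.mpr hJ
  field_simp at h
  exact h

lemma hopf (hhol : DifferentiableOn ℂ φ (polydisc 2)) (hsm : ContDiffOn ℝ 2 φ (closedPolydisc 2))
    (hmap : ∀ z ∈ polydisc 2, φ z ∈ polydisc 2)
    {ζ : Fin 2 → ℂ} (hζ : ζ ∈ closedPolydisc 2) (i : Fin 2) (hi : ‖φ ζ i‖ = 1) :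
    ∃ j, jacEntry 2 φ ζ i j ≠ 0 := by
  by_contra hcon
  push Not at hcon
  have hin : ∀ l : ℂ, ‖l‖ < 1 → l • ζ ∈ polydisc 2 := by
    intro l hl j
    have := hζ j
    rw [Pi.smul_apply, norm_smul]
    nlinarith [norm_nonneg l, norm_nonneg (ζ j)]
  set g : ℂ → ℂ := fun l => φ (l • ζ) i with hg
  have hgd : DifferentiableOn ℂ g (ball 0 1) := by
    have h1 : DifferentiableOn ℂ (fun l : ℂ => φ (l • ζ)) (ball 0 1) :=
      hhol.comp (by fun_prop) (fun l hl => hin l (by simpa using hl))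
    exact differentiableOn_pi.mp h1 i
  have hg1 : ∀ l : ℂ, ‖l‖ < 1 → ‖g l‖ < 1 := fun l hl => hmap _ (hin l hl) i
  set c := g 0 with hc
  have hc1 : ‖c‖ < 1 := hg1 0 (by simp)
  have hc0 := norm_nonneg c
  have hsch : ∀ l : ℂ, ‖l‖ < 1 → ‖mob c (g l)‖ ≤ ‖l‖ := by
    intro l hl
    refine Complex.norm_le_norm_of_mapsTo_ball (f := fun l => mob c (g l)) (R := 1) ?_ ?_ ?_ hl
    · intro x hx
      have hx' : ‖x‖ < 1 := by simpa using hx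
      have h1 : HasDerivAt (mob c) _ (g x) := mob_deriv hc1 (hg1 x hx')
      exact h1.differentiableAt.comp_differentiableWithinAt x (hgd x hx)
    · intro x hx
      have hx' : ‖x‖ < 1 := by simpa using hx
      simpa using (mob_mem hc1 (hg1 x hx')).le
    · simp [mob, ← hc]
  set κ : ℝ := (1 - ‖c‖) ^ 2 with hκ
  have hκ0 : 0 < κ := by have : 0 < 1 - ‖c‖ := by linarith
                         positivity
  have hlow : ∀ r : ℝ, 0 ≤ r → r < 1 → κ / 2 * (1 - r) ≤ 1 - ‖g r‖ := by
    intro r hr0 hr1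
    have hr : ‖(r : ℂ)‖ = r := by rw [Complex.norm_real, Real.norm_of_nonneg hr0]
    have h1 := hsch r (by rw [hr]; exact hr1)
    have h2 := hg1 r (by rw [hr]; exact hr1)
    have h3 := mob_norm hc1 h2.le
    rw [hr] at h1
    have hq : 1 - ‖c‖ ≤ ‖1 - conj c * g r‖ := by
      have := norm_sub_norm_le (1:ℂ) (conj c * g r)
      rw [norm_one, norm_mul, RCLike.norm_conj] at this
      nlinarith [norm_nonneg (g r)]
    have hq2 : κ ≤ ‖1 - conj c * g r‖ ^ 2 := by
      rw [hκ]; gcongr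
    have hqp : 0 < ‖1 - conj c * g r‖ ^ 2 := lt_of_lt_of_le hκ0 hq2
    have h4 : (1 - r ^ 2) * ‖1 - conj c * g r‖ ^ 2 ≤ (1 - ‖c‖ ^ 2) * (1 - ‖g r‖ ^ 2) := by
      rw [← le_div_iff₀ hqp, ← h3]
      nlinarith [norm_nonneg (mob c (g r))]
    have hg0 := norm_nonneg (g r)
    have h5 : (1 - r ^ 2) * κ ≤ (1 - ‖c‖ ^ 2) * (1 - ‖g r‖ ^ 2) :=
      le_trans (mul_le_mul_of_nonneg_left hq2 (by nlinarith)) h4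
    have h6 : (1 - ‖c‖ ^ 2) * (1 - ‖g r‖ ^ 2) ≤ 1 - ‖g r‖ ^ 2 := by
      have : 0 ≤ 1 - ‖g r‖ ^ 2 := by nlinarith
      nlinarith [mul_nonneg this (sq_nonneg ‖c‖)]
    have h7 : 1 - ‖g r‖ ^ 2 ≤ 2 * (1 - ‖g r‖) := by nlinarith
    have h8 : (1 - r) * κ ≤ (1 - r ^ 2) * κ := by
      apply mul_le_mul_of_nonneg_right _ hκ0.le
      nlinarith
    linarith
  obtain ⟨ρ, hρ, hst⟩ := strict_est hsm hζ (ε := κ / 4) (by positivity)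
  have hzn : ‖ζ‖ ≤ 1 := by rw [closedPolydisc_eq] at hζ; simpa using hζ
  set s : ℝ := min (ρ / 2) (1 / 2) with hs
  have hs0 : 0 < s := by positivity
  have hs1 : s ≤ 1 / 2 := min_le_right _ _
  have hs2 : s ≤ ρ / 2 := min_le_left _ _
  have hcast : ‖(((1 - s : ℝ) : ℂ))‖ < 1 := by
    rw [Complex.norm_real, Real.norm_of_nonneg (by linarith)]; linarith
  have hdiff : ζ - (((1 - s : ℝ) : ℂ)) • ζ = ((s : ℝ) : ℂ) • ζ := by
    ext k; simp; ring
  have hdn : ‖ζ - (((1 - s : ℝ) : ℂ)) • ζ‖ ≤ s := by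
    rw [hdiff, norm_smul, Complex.norm_real, Real.norm_of_nonneg hs0.le]; nlinarith
  have h1 := hst ζ hζ ((((1 - s : ℝ) : ℂ)) • ζ) (subset_Q (hin _ hcast)) (by simpa using hρ)
    (by rw [norm_sub_rev]; linarith)
  have h2 := (norm_le_pi_norm _ i).trans h1
  rw [Pi.sub_apply, D_apply hhol hsm hζ] at h2
  simp only [hcon, zero_mul, Finset.sum_const_zero, sub_zero, Pi.sub_apply] at h2
  have h3 := hlow (1 - s) (by linarith) (by linarith)
  have h4 := norm_sub_norm_le (φ ζ i) (φ ((((1 - s : ℝ) : ℂ)) • ζ) i)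
  rw [hi] at h4
  have h5 : κ / 4 * ‖ζ - (((1 - s : ℝ) : ℂ)) • ζ‖ ≤ κ / 4 * s := by gcongr
  have h6 : g ((1 - s : ℝ) : ℂ) = φ ((((1 - s : ℝ) : ℂ)) • ζ) i := rfl
  rw [h6] at h3
  nlinarith [mul_pos hκ0 hs0]

lemma both_unit (hhol : DifferentiableOn ℂ φ (polydisc 2)) (hsm : ContDiffOn ℝ 2 φ (closedPolydisc 2))
    (hmap : ∀ z ∈ polydisc 2, φ z ∈ polydisc 2)
    (hinv : ∀ ζ ∈ torus 2, φ ζ ∈ torus 2 →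
        Matrix.det (Matrix.of fun i j => jacEntry 2 φ ζ i j) ≠ 0)
    {ζ : Fin 2 → ℂ} (hζ : ζ ∈ closedPolydisc 2) (hi : ∀ i, ‖φ ζ i‖ = 1) : ζ ∈ torus 2 := by
  by_contra hcon
  obtain ⟨k, hk⟩ : ∃ k, ‖ζ k‖ < 1 := by
    by_contra hc
    push Not at hc
    exact hcon (fun j => le_antisymm (hζ j) (hc j))
  -- the other coordinate is unimodular
  obtain ⟨j, hj⟩ := hopf hhol hsm hmap hζ 0 (hi 0)
  have hjk : j ≠ k := by
    rintro rfl
    exact hk.ne (bdry_unit hhol hsm hmap hζ 0 j (hi 0) hj)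
  have hju : ‖ζ j‖ = 1 := bdry_unit hhol hsm hmap hζ 0 j (hi 0) hj
  have hall : ∀ l, l = j ∨ l = k := by
    intro l; fin_cases l <;> fin_cases j <;> fin_cases k <;> simp_all
  have hupQ : ∀ w : ℂ, ‖w‖ ≤ 1 → Function.update ζ k w ∈ closedPolydisc 2 := by
    intro w hw l
    by_cases hl : l = k
    · subst hl; simpa using hw
    · simpa [hl] using hζ l
  have hcont : ContinuousOn φ (closedPolydisc 2) := hsm.continuousOn
  -- constancy on the disc
  have hdiff : ∀ i, DifferentiableOn ℂ (fun w : ℂ => φ (Function.update ζ k w) i) (ball 0 1) := by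
    intro i w hw
    have hw' : ‖w‖ < 1 := by simpa using hw
    have hQ := hupQ w hw'.le
    have h1 := hasD hsm hQ
    have h2 : HasFDerivWithinAt (fun w : ℂ => Function.update ζ k w)
        (ContinuousLinearMap.pi (Pi.single k (ContinuousLinearMap.id ℝ ℂ))) (ball 0 1) w :=
      (hasFDerivAt_update ζ w).hasFDerivWithinAt
    have h3 := h1.comp w h2 (fun x hx => hupQ x (by simpa using le_of_lt (mem_ball_zero_iff.mp hx)))
    have h4 := ((ContinuousLinearMap.proj (R := ℝ) (φ := fun _ : Fin 2 => ℂ) i).hasFDerivAt.comp_hasFDerivWithinAt w h3).hasFDerivAt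
      (isOpen_ball.mem_nhds hw)
    have h5 := hasFDerivAt_of_restrictScalars ℝ (f' := ContinuousLinearMap.toSpanSingleton ℂ
      (jacEntry 2 φ (Function.update ζ k w) i k)) h4 (by
        ext c
        · simp only [ContinuousLinearMap.coe_restrictScalars', ContinuousLinearMap.comp_apply,
            ContinuousLinearMap.proj_apply]
          rw [D_single hhol hsm hQ _ i k (by intro l hl; simp [hl])]
          simp [mul_comm])
    exact h5.differentiableAt.differentiableWithinAt
  have hconst : ∀ i, ∀ w : ℂ, ‖w‖ ≤ 1 → φ (Function.update ζ k w) i = φ ζ i := by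
    intro i
    have hc : ContinuousOn (fun w : ℂ => φ (Function.update ζ k w) i) (closedBall 0 1) := by
      have : ContinuousOn (fun w : ℂ => φ (Function.update ζ k w)) (closedBall 0 1) :=
        hcont.comp (by fun_prop) (fun w hw => hupQ w (by simpa using hw))
      exact continuousOn_pi.mp this i
    have he : EqOn (fun w : ℂ => φ (Function.update ζ k w) i) (fun _ => φ ζ i) (ball 0 1) := by
      have := Complex.eqOn_of_isPreconnected_of_isMaxOn_norm (convex_ball (0:ℂ) 1).isPreconnected isOpen_ball
        (hdiff i) (c := ζ k) (by simpa using hk) (by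
          intro w hw
          have hw' : ‖w‖ < 1 := by simpa using hw
          have := map_Q hsm hmap _ (hupQ w hw'.le) i
          simpa [hi i] using this)
      intro w hw
      simpa using this hw
    have := he.of_subset_closure hc continuousOn_const ball_subset_closedBall (by rw [closure_ball _ one_ne_zero])
    intro w hw
    exact this (by simpa using hw)
  -- the torus point
  set ζ' := Function.update ζ k 1 with hζ'
  have hQ' : ζ' ∈ closedPolydisc 2 := hupQ 1 (by simp)
  have hT' : ζ' ∈ torus 2 := by
    intro l
    rcases hall l with rfl | rfl
    · simpa [hζ', hjk] using hju
    · simp [hζ']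
  have hφ' : ∀ i, φ ζ' i = φ ζ i := fun i => hconst i 1 (by simp)
  have hdet := hinv ζ' hT' (fun i => by rw [hφ' i, hi i])
  apply hdet
  have hcol : ∀ i, jacEntry 2 φ ζ' i k = 0 := by
    intro i
    by_contra hne
    have hpos : 0 < ‖jacEntry 2 φ ζ' i k‖ := norm_pos_iff.mpr hne
    obtain ⟨r, hr, hst⟩ := strict_est hsm hQ' (ε := ‖jacEntry 2 φ ζ' i k‖ / 2) (by positivity)
    set s : ℝ := min (r / 2) 1 with hs
    have hs0 : 0 < s := by positivity
    have hs1 : s ≤ 1 := min_le_right _ _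
    have hs2 : s ≤ r / 2 := min_le_left _ _
    have hwn : ‖(((1 - s : ℝ)) : ℂ)‖ ≤ 1 := by
      rw [Complex.norm_real, Real.norm_of_nonneg (by linarith)]; linarith
    have hdf : ζ' - Function.update ζ k (((1 - s : ℝ)) : ℂ) = Pi.single k ((s : ℝ) : ℂ) := by
      ext l
      by_cases hl : l = k
      · subst hl; simp [hζ']
      · simp [hζ', hl]
    have hdn : ‖ζ' - Function.update ζ k (((1 - s : ℝ)) : ℂ)‖ = s := by
      rw [hdf, Pi.norm_single, Complex.norm_real, Real.norm_of_nonneg hs0.le]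
    have h1 := hst ζ' hQ' _ (hupQ _ hwn) (by simpa using hr) (by rw [norm_sub_rev, hdn]; linarith)
    have h2 := (norm_le_pi_norm _ i).trans h1
    rw [Pi.sub_apply, hdn, hdf, D_single hhol hsm hQ' _ i k (by intro l hl; simp [hl]), Pi.sub_apply,
      hconst i _ hwn, hφ' i, sub_self, zero_sub, norm_neg, norm_mul, Pi.single_eq_same, Complex.norm_real,
      Real.norm_of_nonneg hs0.le] at h2
    nlinarith
  apply Matrix.det_eq_zero_of_column_eq_zero k
  intro i
  exact hcol i

end

lemma exists_polar (x : ℂ) (hx : ‖x‖ ≤ 1) : ∃ η : ℂ, ‖η‖ = 1 ∧ x = (‖x‖ : ℂ) * η ∧ ‖η - x‖ = 1 - ‖x‖ := by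
  obtain ⟨η, h1, h2⟩ : ∃ η : ℂ, ‖η‖ = 1 ∧ x = (‖x‖ : ℂ) * η := by
    by_cases h : x = 0
    · exact ⟨1, by simp, by simp [h]⟩
    · have hn : ((‖x‖ : ℝ) : ℂ) ≠ 0 := by exact_mod_cast norm_ne_zero_iff.mpr h
      refine ⟨x / (‖x‖ : ℂ), ?_, ?_⟩
      · rw [norm_div, Complex.norm_real, norm_norm, div_self (norm_ne_zero_iff.mpr h)]
      · field_simp
  refine ⟨η, h1, h2, ?_⟩
  have : η - x = ((1 - ‖x‖ : ℝ) : ℂ) * η := by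
    conv_lhs => rw [h2]
    push_cast; ring
  rw [this, norm_mul, h1, Complex.norm_real, Real.norm_of_nonneg (by linarith), mul_one]

section
variable {φ : (Fin 2 → ℂ) → (Fin 2 → ℂ)}

lemma geom (hhol : DifferentiableOn ℂ φ (polydisc 2)) (hsm : ContDiffOn ℝ 2 φ (closedPolydisc 2))
    (hmap : ∀ z ∈ polydisc 2, φ z ∈ polydisc 2)
    {ζ : Fin 2 → ℂ} (hζ : ζ ∈ closedPolydisc 2) (i j : Fin 2) (hi : ‖φ ζ i‖ = 1)
    (hJ : jacEntry 2 φ ζ i j ≠ 0) :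
    ∃ r > 0, ∃ c > 0,
      (∀ z ∈ closedPolydisc 2, ∀ z' ∈ closedPolydisc 2, ‖z - ζ‖ < r → ‖z' - ζ‖ < r →
        (∀ k, k ≠ j → z k = z' k) → c * ‖z j - z' j‖ ≤ ‖φ z i - φ z' i‖) ∧
      (∀ z ∈ closedPolydisc 2, ‖z - ζ‖ < r → c * (1 - ‖z j‖) ≤ 1 - ‖φ z i‖) := by
  set m := ‖jacEntry 2 φ ζ i j‖ with hm
  have hm0 : 0 < m := norm_pos_iff.mpr hJ
  have hζj : ‖ζ j‖ = 1 := bdry_unit hhol hsm hmap hζ i j hi hJ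
  obtain ⟨r0, hr0, hst⟩ := strict_est hsm hζ (ε := m / 4) (by positivity)
  set N := ‖fderivWithin ℝ φ (closedPolydisc 2) ζ‖ with hN
  have hN0 : 0 ≤ N := norm_nonneg _
  set r := min (r0 / 2) (1 / (8 * (1 + N + m / 4))) with hr
  have hrp : 0 < r := by positivity
  have hr1 : r ≤ r0 / 2 := min_le_left _ _
  have hr2 : r * (8 * (1 + N + m / 4)) ≤ 1 := by
    rw [← le_div_iff₀ (by positivity)]; exact min_le_right _ _
  -- single-coordinate increments
  have hinc : ∀ z ∈ closedPolydisc 2, ∀ z' ∈ closedPolydisc 2, ‖z - ζ‖ < r0 → ‖z' - ζ‖ < r0 →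
      (∀ k, k ≠ j → z k = z' k) →
      ‖φ z i - φ z' i - jacEntry 2 φ ζ i j * (z j - z' j)‖ ≤ m / 4 * ‖z j - z' j‖ := by
    intro z hz z' hz' h1 h2 hk
    have e : z - z' = Pi.single j (z j - z' j) := by
      ext l
      by_cases hl : l = j
      · subst hl; simp
      · simp [hl, hk l hl]
    have h3 := (norm_le_pi_norm _ i).trans (hst z hz z' hz' h1 h2)
    rw [Pi.sub_apply, Pi.sub_apply, D_single hhol hsm hζ (z - z') i j
      (by intro k hkj; simp [hk k hkj]), Pi.sub_apply] at h3
    rwa [e, Pi.norm_single] at h3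
  refine ⟨r, hrp, m / 4, by positivity, ?_, ?_⟩
  · intro z hz z' hz' h1 h2 hk
    have h3 := hinc z hz z' hz' (by linarith) (by linarith) hk
    have h4 := norm_sub_norm_le (jacEntry 2 φ ζ i j * (z j - z' j)) (φ z i - φ z' i)
    rw [norm_sub_rev (jacEntry 2 φ ζ i j * (z j - z' j)) (φ z i - φ z' i), norm_mul, ← hm] at h4
    nlinarith [mul_nonneg hm0.le (norm_nonneg (z j - z' j))]
  · intro z hz h1
    have hzj := hz j
    obtain ⟨ω, hω, hω1, hω2⟩ := exists_polar (z j) hzj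
    obtain ⟨η, hη, hη1, hη2⟩ := exists_polar (φ z i) (map_Q hsm hmap z hz i)
    have hzζ : ‖z j - ζ j‖ < r := lt_of_le_of_lt (norm_le_pi_norm (z - ζ) j) h1
    have hdz : 1 - ‖z j‖ ≤ ‖z j - ζ j‖ := by
      have := norm_sub_norm_le (ζ j) (z j)
      rw [hζj, norm_sub_rev] at this; exact this
    set z' := Function.update z j ω with hz'
    have hz'Q : z' ∈ closedPolydisc 2 := by
      intro l
      by_cases hl : l = j
      · subst hl; simp [hz', hω]
      · simpa [hz', hl] using hz l
    have hz'j : z' j = ω := by simp [hz']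
    have hdiff : z' - z = Pi.single j (ω - z j) := by
      ext l
      by_cases hl : l = j
      · subst hl; simp [hz']
      · simp [hz', hl]
    have hz'ζ : ‖z' - ζ‖ < r0 := by
      have : ‖z' - ζ‖ ≤ ‖z' - z‖ + ‖z - ζ‖ := by
        have := norm_add_le (z' - z) (z - ζ); simpa using this
      rw [hdiff, Pi.norm_single, hω2] at this
      linarith
    have h3 := hinc z' hz'Q z hz hz'ζ (by linarith) (by intro k hk; simp [hz', hk])
    rw [hz'j, hω2] at h3
    set t := 1 - ‖z j‖ with ht
    have ht0 : 0 ≤ t := by linarith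
    have hωz : ω - z j = (t : ℂ) * ω := by
      rw [ht]; conv_lhs => rw [hω1]
      push_cast; ring
    -- closeness of directions
    have c1 : ‖ω - ζ j‖ ≤ 1 / 4 := by
      have : ‖ω - ζ j‖ ≤ ‖ω - z j‖ + ‖z j - ζ j‖ := by
        have := norm_add_le (ω - z j) (z j - ζ j); simpa using this
      rw [hω2] at this
      nlinarith
    have c2 : ‖η - φ ζ i‖ ≤ 1 / 4 := by
      have a1 : ‖φ z i - φ ζ i‖ ≤ (N + m / 4) * ‖z - ζ‖ := by
        have b1 := hst z hz ζ hζ (by linarith) (by simpa using hr0)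
        have b2 := (fderivWithin ℝ φ (closedPolydisc 2) ζ).le_opNorm (z - ζ)
        have b3 := norm_le_pi_norm (φ z - φ ζ) i
        have b4 := norm_sub_norm_le (φ z - φ ζ) (fderivWithin ℝ φ (closedPolydisc 2) ζ (z - ζ))
        rw [Pi.sub_apply] at b3
        rw [← hN] at b2
        linarith
      have a2 : (N + m / 4) * ‖z - ζ‖ ≤ (N + m / 4) * r := by gcongr
      have a3 : ‖η - φ ζ i‖ ≤ ‖η - φ z i‖ + ‖φ z i - φ ζ i‖ := by
        have := norm_add_le (η - φ z i) (φ z i - φ ζ i); simpa using this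
      have a4 : 1 - ‖φ z i‖ ≤ ‖φ z i - φ ζ i‖ := by
        have := norm_sub_norm_le (φ ζ i) (φ z i)
        rw [hi, norm_sub_rev] at this; exact this
      rw [hη2] at a3
      nlinarith
    have hreal := bdry_real hhol hsm hmap hζ i j hi
    rw [← hm] at hreal
    have key : m / 2 ≤ (conj η * jacEntry 2 φ ζ i j * ω).re := by
      have e : conj η * jacEntry 2 φ ζ i j * ω = (m : ℂ) +
          (conj (η - φ ζ i) * jacEntry 2 φ ζ i j * ω + conj (φ ζ i) * jacEntry 2 φ ζ i j * (ω - ζ j)) := by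
        rw [← hreal, map_sub]; ring
      rw [e, Complex.add_re, Complex.ofReal_re]
      have e2 : ‖conj (η - φ ζ i) * jacEntry 2 φ ζ i j * ω + conj (φ ζ i) * jacEntry 2 φ ζ i j * (ω - ζ j)‖ ≤ m / 2 := by
        refine (norm_add_le _ _).trans ?_
        rw [norm_mul, norm_mul, norm_mul, norm_mul, RCLike.norm_conj, RCLike.norm_conj, hω, hi, ← hm]
        nlinarith
      have := neg_le_of_abs_le ((Complex.abs_re_le_norm _).trans e2)
      linarith
    have hfin : (conj η * φ z' i).re ≤ 1 := by
      refine (Complex.re_le_norm _).trans ?_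
      rw [norm_mul, RCLike.norm_conj, hη, one_mul]; exact map_Q hsm hmap z' hz'Q i
    set err := φ z' i - φ z i - jacEntry 2 φ ζ i j * (ω - z j) with herr
    have e3 : conj η * φ z' i = ((‖φ z i‖ : ℝ) : ℂ) + (t : ℂ) * (conj η * jacEntry 2 φ ζ i j * ω) + conj η * err := by
      have hηη : conj η * η = 1 := by
        rw [mul_comm, Complex.mul_conj, Complex.normSq_eq_norm_sq, hη]; simp
      have : conj η * φ z i = ((‖φ z i‖ : ℝ) : ℂ) := by
        conv_lhs => rw [hη1]
        rw [mul_left_comm, hηη, mul_one]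
      rw [← this, herr, hωz]; ring
    rw [e3, Complex.add_re, Complex.add_re, Complex.ofReal_re, Complex.re_ofReal_mul] at hfin
    have e4 : -(m / 4 * t) ≤ (conj η * err).re := by
      apply neg_le_of_abs_le
      refine (Complex.abs_re_le_norm _).trans ?_
      rw [norm_mul, RCLike.norm_conj, hη, one_mul]; exact h3
    nlinarith

/-- preimage set -/
def Su (φ : (Fin 2 → ℂ) → (Fin 2 → ℂ)) (u : Fin 2 → ℂ) : Set (Fin 2 → ℂ) :=
  {z | z ∈ polydisc 2 ∧ ∀ i, ‖φ z i - u i‖ ≤ (1 - ‖u i‖) / 2}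

lemma Su_meas (hsm : ContDiffOn ℝ 2 φ (closedPolydisc 2)) (u : Fin 2 → ℂ) : MeasurableSet (Su φ u) := by
  have hT : IsClosed {w : Fin 2 → ℂ | ∀ i, ‖w i - u i‖ ≤ (1 - ‖u i‖) / 2} := by
    have : {w : Fin 2 → ℂ | ∀ i, ‖w i - u i‖ ≤ (1 - ‖u i‖) / 2} =
        ⋂ i, {w : Fin 2 → ℂ | ‖w i - u i‖ ≤ (1 - ‖u i‖) / 2} := by ext; simp
    rw [this]
    refine isClosed_iInter (fun i => ?_)
    exact isClosed_le (by fun_prop) (by fun_prop)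
  have h1 : IsClosed (closedPolydisc 2 ∩ φ ⁻¹' {w : Fin 2 → ℂ | ∀ i, ‖w i - u i‖ ≤ (1 - ‖u i‖) / 2}) := by
    refine hsm.continuousOn.preimage_isClosed_of_isClosed ?_ hT
    rw [closedPolydisc_eq]; exact isClosed_closedBall
  have h2 : MeasurableSet (polydisc 2) := by rw [polydisc_eq_ball]; exact measurableSet_ball
  have : Su φ u = polydisc 2 ∩ (closedPolydisc 2 ∩ φ ⁻¹' {w : Fin 2 → ℂ | ∀ i, ‖w i - u i‖ ≤ (1 - ‖u i‖) / 2}) := by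
    ext z
    constructor
    · rintro ⟨a, b⟩; exact ⟨a, subset_Q a, b⟩
    · rintro ⟨a, _, b⟩; exact ⟨a, b⟩
  rw [this]
  exact h2.inter h1.measurableSet

lemma Su_bounds {u z : Fin 2 → ℂ} (hz : z ∈ Su φ u) (i : Fin 2) :
    1 - ‖φ z i‖ ≤ 3 / 2 * (1 - ‖u i‖) := by
  have h := hz.2 i
  have := norm_sub_norm_le (u i) (φ z i)
  rw [norm_sub_rev] at this
  linarith

lemma Su_diff {u z z' : Fin 2 → ℂ} (hz : z ∈ Su φ u) (hz' : z' ∈ Su φ u) (i : Fin 2) :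
    ‖φ z i - φ z' i‖ ≤ 1 - ‖u i‖ := by
  have h := hz.2 i
  have h' := hz'.2 i
  have := norm_sub_le (φ z i - u i) (φ z' i - u i)
  simp only [sub_sub_sub_cancel_right] at this
  linarith

lemma prod_two (f : Fin 2 → ℝ) (i i' : Fin 2) (h : i ≠ i') : ∏ l, f l = f i * f i' := by
  rw [Fin.prod_univ_two]
  fin_cases i <;> fin_cases i'
  · exact absurd rfl h
  · rfl
  · exact mul_comm _ _
  · exact absurd rfl h

lemma local_finish (β : ℝ) (hβ : -1 < β) (hsm : ContDiffOn ℝ 2 φ (closedPolydisc 2)) : ∃ C0 : ℝ, 0 ≤ C0 ∧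
    ∀ (ζ : Fin 2 → ℂ) (r K : ℝ), 0 < K → ∀ u ∈ polydisc 2, ∀ i i' j k : Fin 2, i ≠ i' → j ≠ k →
    (∀ z ∈ Su φ u ∩ ball ζ r, ∀ z' ∈ Su φ u ∩ ball ζ r, z k = z' k → ‖z j - z' j‖ ≤ K * (1 - ‖u i‖)) →
    (∀ z ∈ Su φ u ∩ ball ζ r, 1 - ‖z j‖ ≤ K * (1 - ‖u i‖)) →
    (∀ z ∈ Su φ u ∩ ball ζ r, ∀ z' ∈ Su φ u ∩ ball ζ r, ‖z k - z' k‖ ≤ K * (1 - ‖u i'‖)) →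
    (∀ z ∈ Su φ u ∩ ball ζ r, 1 - ‖z k‖ ≤ K * (1 - ‖u i'‖)) →
    Vbeta 2 β (Su φ u ∩ ball ζ r) ≤ ENNReal.ofReal (C0 * (K ^ (β + 2)) ^ 2 *
      ∏ i, (1 - ‖u i‖) ^ (β + 2)) := by
  obtain ⟨C0, hC0, hbox⟩ := Vbeta_box β hβ
  refine ⟨C0, hC0, fun ζ r K hK u hu i i' j k hii hjk h1 h2 h3 h4 => ?_⟩
  have p1 : 0 < 1 - ‖u i‖ := by linarith [hu i]
  have p2 : 0 < 1 - ‖u i'‖ := by linarith [hu i']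
  have := hbox (Su φ u ∩ ball ζ r) (fun z hz => hz.1.1) ((Su_meas hsm u).inter measurableSet_ball) j k hjk
    _ _ (mul_pos hK p1) (mul_pos hK p2) h1 h2 h3 h4
  refine this.trans (le_of_eq ?_)
  congr 1
  rw [Real.mul_rpow hK.le p1.le, Real.mul_rpow hK.le p2.le]
  have : ∏ i, (1 - ‖u i‖) ^ (β + 2) = (1 - ‖u i‖) ^ (β + 2) * (1 - ‖u i'‖) ^ (β + 2) :=
    prod_two (fun i => (1 - ‖u i‖) ^ (β + 2)) i i' hii
  rw [this]; ring

end

section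
variable {φ : (Fin 2 → ℂ) → (Fin 2 → ℂ)}

lemma triv_bounds {z z' : Fin 2 → ℂ} (hz : z ∈ polydisc 2) (hz' : z' ∈ polydisc 2) (k : Fin 2) :
    ‖z k - z' k‖ ≤ 2 ∧ 1 - ‖z k‖ ≤ 2 := by
  have := norm_sub_le (z k) (z' k)
  have h1 := hz k
  have h2 := hz' k
  exact ⟨by linarith, by linarith [norm_nonneg (z k)]⟩

lemma interior_idx (hsm : ContDiffOn ℝ 2 φ (closedPolydisc 2))
    {ζ : Fin 2 → ℂ} (hζ : ζ ∈ closedPolydisc 2) (i : Fin 2) (hi : ‖φ ζ i‖ < 1) :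
    ∃ r > 0, ∃ K > 0, ∀ u, ∀ z ∈ Su φ u ∩ ball ζ r, 2 ≤ K * (1 - ‖u i‖) := by
  set e := (1 - ‖φ ζ i‖) / 2 with he
  have he0 : 0 < e := by rw [he]; linarith
  obtain ⟨r, hr, h⟩ := Metric.continuousWithinAt_iff.mp (hsm.continuousOn ζ hζ) e he0
  refine ⟨r, hr, 3 / e, by positivity, ?_⟩
  rintro u z ⟨hz, hzr⟩
  have h1 := h (subset_Q hz.1) hzr
  have h2 := Su_bounds hz i
  rw [dist_eq_norm] at h1
  have h3 := (norm_le_pi_norm (φ z - φ ζ) i).trans h1.le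
  have h4 := norm_sub_norm_le (φ z i) (φ ζ i)
  rw [Pi.sub_apply] at h3
  have h5 : e ≤ 3 / 2 * (1 - ‖u i‖) := by linarith
  rw [div_mul_eq_mul_div, le_div_iff₀ he0]
  linarith

lemma exists_ne_fin2 (i : Fin 2) : ∃ i' : Fin 2, i ≠ i' := ⟨i + 1, by fin_cases i <;> simp⟩

lemma local_one (hhol : DifferentiableOn ℂ φ (polydisc 2)) (hsm : ContDiffOn ℝ 2 φ (closedPolydisc 2))
    (hmap : ∀ z ∈ polydisc 2, φ z ∈ polydisc 2) (β : ℝ) (hβ : -1 < β)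
    {ζ : Fin 2 → ℂ} (hζ : ζ ∈ closedPolydisc 2) (i i' : Fin 2) (hii : i ≠ i') (hi' : ‖φ ζ i'‖ < 1) :
    ∃ r > 0, ∃ C ≥ (0:ℝ), ∀ u ∈ polydisc 2, Vbeta 2 β (Su φ u ∩ ball ζ r) ≤
      ENNReal.ofReal (C * ∏ i, (1 - ‖u i‖) ^ (β + 2)) := by
  obtain ⟨C0, hC0, hfin⟩ := local_finish (φ := φ) β hβ hsm
  obtain ⟨r1, hr1, K1, hK1, h1⟩ := interior_idx hsm hζ i' hi'
  by_cases hi : ‖φ ζ i‖ < 1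
  · obtain ⟨r2, hr2, K2, hK2, h2⟩ := interior_idx hsm hζ i hi
    refine ⟨min r1 r2, lt_min hr1 hr2, C0 * ((K1 + K2) ^ (β + 2)) ^ 2, by positivity, fun u hu => ?_⟩
    have hs1 : Su φ u ∩ ball ζ (min r1 r2) ⊆ Su φ u ∩ ball ζ r1 :=
      inter_subset_inter_right _ (ball_subset_ball (min_le_left _ _))
    have hs2 : Su φ u ∩ ball ζ (min r1 r2) ⊆ Su φ u ∩ ball ζ r2 :=
      inter_subset_inter_right _ (ball_subset_ball (min_le_right _ _))
    have p1 : 0 < 1 - ‖u i‖ := by linarith [hu i]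
    have p2 : 0 < 1 - ‖u i'‖ := by linarith [hu i']
    have a1 : ∀ z ∈ Su φ u ∩ ball ζ (min r1 r2), 2 ≤ (K1 + K2) * (1 - ‖u i'‖) := by
      intro z hz; nlinarith [h1 u z (hs1 hz)]
    have a2 : ∀ z ∈ Su φ u ∩ ball ζ (min r1 r2), 2 ≤ (K1 + K2) * (1 - ‖u i‖) := by
      intro z hz; nlinarith [h2 u z (hs2 hz)]
    refine hfin ζ _ (K1 + K2) (by positivity) u hu i i' i i' hii hii ?_ ?_ ?_ ?_
    · intro z hz z' hz' _
      exact (triv_bounds hz.1.1 hz'.1.1 _).1.trans (a2 z hz)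
    · intro z hz
      exact (triv_bounds hz.1.1 hz.1.1 _).2.trans (a2 z hz)
    · intro z hz z' hz'
      exact (triv_bounds hz.1.1 hz'.1.1 _).1.trans (a1 z hz)
    · intro z hz
      exact (triv_bounds hz.1.1 hz.1.1 _).2.trans (a1 z hz)
  · have hi1 : ‖φ ζ i‖ = 1 := le_antisymm (map_Q hsm hmap ζ hζ i) (not_lt.mp hi)
    obtain ⟨j, hj⟩ := hopf hhol hsm hmap hζ i hi1
    obtain ⟨k, hjk⟩ := exists_ne_fin2 j
    obtain ⟨r2, hr2, c, hc, hg1, hg2⟩ := geom hhol hsm hmap hζ i j hi1 hj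
    refine ⟨min r1 r2, lt_min hr1 hr2, C0 * ((K1 + 2 / c) ^ (β + 2)) ^ 2, by positivity, fun u hu => ?_⟩
    have hs1 : Su φ u ∩ ball ζ (min r1 r2) ⊆ Su φ u ∩ ball ζ r1 :=
      inter_subset_inter_right _ (ball_subset_ball (min_le_left _ _))
    have hs2 : ∀ z ∈ Su φ u ∩ ball ζ (min r1 r2), ‖z - ζ‖ < r2 := by
      intro z hz
      have := ball_subset_ball (min_le_right r1 r2) hz.2
      rwa [mem_ball, dist_eq_norm] at this
    have p1 : 0 < 1 - ‖u i‖ := by linarith [hu i]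
    have p2 : 0 < 1 - ‖u i'‖ := by linarith [hu i']
    have a1 : ∀ z ∈ Su φ u ∩ ball ζ (min r1 r2), 2 ≤ (K1 + 2 / c) * (1 - ‖u i'‖) := by
      intro z hz
      have : 0 ≤ 2 / c * (1 - ‖u i'‖) := by positivity
      nlinarith [h1 u z (hs1 hz)]
    have a3 : ∀ t, c * t ≤ 3 / 2 * (1 - ‖u i‖) → t ≤ (K1 + 2 / c) * (1 - ‖u i‖) := by
      intro t ht
      have h1 : t ≤ 2 / c * (1 - ‖u i‖) := by
        rw [div_mul_eq_mul_div, le_div_iff₀ hc]; linarith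
      have : 0 ≤ K1 * (1 - ‖u i‖) := by positivity
      linarith
    refine hfin ζ _ (K1 + 2 / c) (by positivity) u hu i i' j k hii hjk ?_ ?_ ?_ ?_
    · intro z hz z' hz' hk
      apply a3
      have hk' : ∀ l, l ≠ j → z l = z' l := by
        intro l hl
        have : l = k := by omega
        rw [this, hk]
      have b1 := hg1 z (subset_Q hz.1.1) z' (subset_Q hz'.1.1) (hs2 z hz) (hs2 z' hz') hk'
      have b2 := Su_diff hz.1 hz'.1 i
      linarith
    · intro z hz
      apply a3
      exact (hg2 z (subset_Q hz.1.1) (hs2 z hz)).trans (Su_bounds hz.1 i)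
    · intro z hz z' hz'
      exact (triv_bounds hz.1.1 hz'.1.1 _).1.trans (a1 z hz)
    · intro z hz
      exact (triv_bounds hz.1.1 hz.1.1 _).2.trans (a1 z hz)

lemma sigma_exists (J : Fin 2 → Fin 2 → ℂ) (h : J 0 0 * J 1 1 - J 0 1 * J 1 0 ≠ 0) :
    ∃ σ : Fin 2 → Fin 2, σ 0 ≠ σ 1 ∧ ∀ i, J i (σ i) ≠ 0 := by
  by_cases h1 : J 0 0 * J 1 1 = 0
  · have h2 : J 0 1 * J 1 0 ≠ 0 := by intro h3; simp [h1, h3] at h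
    refine ⟨![1, 0], by simp, ?_⟩
    intro i; fin_cases i
    · exact left_ne_zero_of_mul h2
    · exact right_ne_zero_of_mul h2
  · refine ⟨![0, 1], by simp, ?_⟩
    intro i; fin_cases i
    · exact left_ne_zero_of_mul h1
    · exact right_ne_zero_of_mul h1

lemma D_below (hhol : DifferentiableOn ℂ φ (polydisc 2)) (hsm : ContDiffOn ℝ 2 φ (closedPolydisc 2))
    {ζ : Fin 2 → ℂ} (hζ : ζ ∈ closedPolydisc 2)
    (h : jacEntry 2 φ ζ 0 0 * jacEntry 2 φ ζ 1 1 - jacEntry 2 φ ζ 0 1 * jacEntry 2 φ ζ 1 0 ≠ 0) :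
    ∃ c > 0, ∀ v, c * ‖v‖ ≤ ‖fderivWithin ℝ φ (closedPolydisc 2) ζ v‖ := by
  set J := jacEntry 2 φ ζ with hJ
  set dt := J 0 0 * J 1 1 - J 0 1 * J 1 0 with hdt
  have hd : 0 < ‖dt‖ := norm_pos_iff.mpr h
  set S := ‖J 0 0‖ + ‖J 0 1‖ + ‖J 1 0‖ + ‖J 1 1‖ with hS
  have n00 := norm_nonneg (J 0 0)
  have n01 := norm_nonneg (J 0 1)
  have n10 := norm_nonneg (J 1 0)
  have n11 := norm_nonneg (J 1 1)
  refine ⟨‖dt‖ / (1 + S), by positivity, fun v => ?_⟩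
  set w := fderivWithin ℝ φ (closedPolydisc 2) ζ v with hw
  have e0 : w 0 = J 0 0 * v 0 + J 0 1 * v 1 := by rw [hw, D_apply hhol hsm hζ, Fin.sum_univ_two]
  have e1 : w 1 = J 1 0 * v 0 + J 1 1 * v 1 := by rw [hw, D_apply hhol hsm hζ, Fin.sum_univ_two]
  have f0 : dt * v 0 = J 1 1 * w 0 - J 0 1 * w 1 := by rw [e0, e1, hdt]; ring
  have f1 : dt * v 1 = J 0 0 * w 1 - J 1 0 * w 0 := by rw [e0, e1, hdt]; ring
  have w0 := norm_le_pi_norm w 0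
  have w1 := norm_le_pi_norm w 1
  have nw := norm_nonneg w
  have g0 : ‖dt‖ * ‖v 0‖ ≤ (1 + S) * ‖w‖ := by
    rw [← norm_mul, f0]
    refine (norm_sub_le _ _).trans ?_
    rw [norm_mul, norm_mul]
    have := mul_le_mul_of_nonneg_left w0 n11
    have := mul_le_mul_of_nonneg_left w1 n01
    have := mul_nonneg n00 nw
    have := mul_nonneg n10 nw
    rw [hS]; linarith
  have g1 : ‖dt‖ * ‖v 1‖ ≤ (1 + S) * ‖w‖ := by
    rw [← norm_mul, f1]
    refine (norm_sub_le _ _).trans ?_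
    rw [norm_mul, norm_mul]
    have := mul_le_mul_of_nonneg_left w1 n00
    have := mul_le_mul_of_nonneg_left w0 n10
    have := mul_nonneg n01 nw
    have := mul_nonneg n11 nw
    rw [hS]; linarith
  have hv : ‖v‖ ≤ (1 + S) * ‖w‖ / ‖dt‖ := by
    rw [pi_norm_le_iff_of_nonneg (by positivity)]
    intro i
    rw [le_div_iff₀ hd]
    fin_cases i
    · change ‖v 0‖ * ‖dt‖ ≤ _
      linarith
    · change ‖v 1‖ * ‖dt‖ ≤ _
      linarith
  rw [div_mul_eq_mul_div, div_le_iff₀ (by positivity)]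
  rw [le_div_iff₀ hd] at hv
  linarith

lemma local_two (hhol : DifferentiableOn ℂ φ (polydisc 2)) (hsm : ContDiffOn ℝ 2 φ (closedPolydisc 2))
    (hmap : ∀ z ∈ polydisc 2, φ z ∈ polydisc 2) (β : ℝ) (hβ : -1 < β)
    {ζ : Fin 2 → ℂ} (hζ : ζ ∈ closedPolydisc 2) (hi : ∀ i, ‖φ ζ i‖ = 1)
    (h : jacEntry 2 φ ζ 0 0 * jacEntry 2 φ ζ 1 1 - jacEntry 2 φ ζ 0 1 * jacEntry 2 φ ζ 1 0 ≠ 0) :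
    ∃ r > 0, ∃ C ≥ (0:ℝ), ∀ u ∈ polydisc 2, Vbeta 2 β (Su φ u ∩ ball ζ r) ≤
      ENNReal.ofReal (C * ∏ i, (1 - ‖u i‖) ^ (β + 2)) := by
  obtain ⟨C0, hC0, hfin⟩ := local_finish (φ := φ) β hβ hsm
  obtain ⟨σ, hσ, hσJ⟩ := sigma_exists (jacEntry 2 φ ζ) h
  obtain ⟨c, hc, hD⟩ := D_below hhol hsm hζ h
  obtain ⟨r3, hr3, hst⟩ := strict_est hsm hζ (ε := c / 2) (by positivity)
  choose r hr c' hc' hg1 hg2 using fun i => geom hhol hsm hmap hζ i (σ i) (hi i) (hσJ i)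
  set R := min r3 (min (r 0) (r 1)) with hR
  have hRr : ∀ i, R ≤ r i := by
    intro i; fin_cases i
    · exact (min_le_right _ _).trans (min_le_left _ _)
    · exact (min_le_right _ _).trans (min_le_right _ _)
  have hRp : 0 < R := lt_min hr3 (lt_min (hr 0) (hr 1))
  set K := 2 / c + 2 / c' 0 + 2 / c' 1 with hK
  have q0 := hc' 0
  have q1 := hc' 1
  have hKp : 0 < K := by positivity
  have hKc : 2 ≤ K * c := by
    have : 2 = 2 / c * c := by field_simp
    have h2 : 0 < 2 / c' 0 * c := by positivity
    have h3 : 0 < 2 / c' 1 * c := by positivity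
    rw [hK]; nlinarith
  have hKi : ∀ i, 2 ≤ K * c' i := by
    intro i
    have hci := hc' i
    have h1 : 0 < 2 / c * c' i := by positivity
    have h2 : 0 < 2 / c' 0 * c' i := by positivity
    have h3 : 0 < 2 / c' 1 * c' i := by positivity
    have h4 : 2 / c' i * c' i = 2 := by field_simp
    have h5 : 2 / c' i * c' i ≤ (2 / c' 0 + 2 / c' 1) * c' i := by
      fin_cases i
      · simp only [Fin.zero_eta, Fin.isValue] at *; nlinarith
      · simp only [Fin.mk_one, Fin.isValue] at *; nlinarith
    rw [hK]; nlinarith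
  refine ⟨R, hRp, C0 * (K ^ (β + 2)) ^ 2, by positivity, fun u hu => ?_⟩
  obtain ⟨i, i', hii, hle⟩ : ∃ i i' : Fin 2, i ≠ i' ∧ 1 - ‖u i‖ ≤ 1 - ‖u i'‖ := by
    rcases le_total (1 - ‖u 0‖) (1 - ‖u 1‖) with h | h
    · exact ⟨0, 1, by simp, h⟩
    · exact ⟨1, 0, by simp, h⟩
  have hjk : σ i ≠ σ i' := by
    intro he
    apply hσ
    have : (i = 0 ∧ i' = 1) ∨ (i = 1 ∧ i' = 0) := by omega
    rcases this with ⟨a, b⟩ | ⟨a, b⟩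
    · rw [← a, ← b, he]
    · rw [← a, ← b, he]
  have hs : ∀ z ∈ Su φ u ∩ ball ζ R, ‖z - ζ‖ < R := by
    intro z hz
    have := hz.2
    rwa [mem_ball, dist_eq_norm] at this
  have p : ∀ i, 0 < 1 - ‖u i‖ := fun i => by linarith [hu i]
  have a3 : ∀ i t, 0 ≤ t → c' i * t ≤ 3 / 2 * (1 - ‖u i‖) → t ≤ K * (1 - ‖u i‖) := by
    intro i t ht0 ht
    have h1 := hKi i
    have h2 := mul_le_mul_of_nonneg_left ht hKp.le
    have h3 := mul_le_mul_of_nonneg_right h1 ht0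
    have := mul_nonneg hKp.le (p i).le
    nlinarith
  have near : ∀ i, ∀ z ∈ Su φ u ∩ ball ζ R, 1 - ‖z (σ i)‖ ≤ K * (1 - ‖u i‖) := by
    intro i z hz
    refine a3 i _ (by linarith [hz.1.1 (σ i)]) ?_
    exact (hg2 i z (subset_Q hz.1.1) ((hs z hz).trans_le (hRr i))).trans (Su_bounds hz.1 i)
  refine hfin ζ R K hKp u hu i i' (σ i) (σ i') hii hjk ?_ (near i) ?_ (near i')
  · intro z hz z' hz' hk
    refine a3 i _ (norm_nonneg _) ?_
    have hk' : ∀ l, l ≠ σ i → z l = z' l := by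
      intro l hl
      have : l = σ i' := by omega
      rw [this, hk]
    have b1 := hg1 i z (subset_Q hz.1.1) z' (subset_Q hz'.1.1) ((hs z hz).trans_le (hRr i))
      ((hs z' hz').trans_le (hRr i)) hk'
    have b2 := Su_diff hz.1 hz'.1 i
    linarith [p i]
  · intro z hz z' hz'
    have b1 := hst z (subset_Q hz.1.1) z' (subset_Q hz'.1.1) ((hs z hz).trans_le (min_le_left _ _))
      ((hs z' hz').trans_le (min_le_left _ _))
    have b2 := hD (z - z')
    have b3 := norm_sub_norm_le (fderivWithin ℝ φ (closedPolydisc 2) ζ (z - z')) (φ z - φ z')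
    rw [norm_sub_rev (fderivWithin ℝ φ (closedPolydisc 2) ζ (z - z'))] at b3
    have b4 : ‖φ z - φ z'‖ ≤ 1 - ‖u i'‖ := by
      rw [pi_norm_le_iff_of_nonneg (p i').le]
      intro l
      have := Su_diff hz.1 hz'.1 l
      have hl : l = i ∨ l = i' := by omega
      rcases hl with rfl | rfl
      · exact this.trans hle
      · exact this
    have b5 := norm_le_pi_norm (z - z') (σ i')
    rw [Pi.sub_apply] at b5
    have b6 : c / 2 * ‖z - z'‖ ≤ 1 - ‖u i'‖ := by linarith
    have b7 := mul_le_mul_of_nonneg_left b6 hKp.le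
    have b8 := mul_le_mul_of_nonneg_right hKc (norm_nonneg (z - z'))
    nlinarith

lemma local_all (hhol : DifferentiableOn ℂ φ (polydisc 2)) (hsm : ContDiffOn ℝ 2 φ (closedPolydisc 2))
    (hmap : ∀ z ∈ polydisc 2, φ z ∈ polydisc 2) (β : ℝ) (hβ : -1 < β)
    (hinv : ∀ ζ ∈ torus 2, φ ζ ∈ torus 2 →
        Matrix.det (Matrix.of fun i j => jacEntry 2 φ ζ i j) ≠ 0)
    {ζ : Fin 2 → ℂ} (hζ : ζ ∈ closedPolydisc 2) :
    ∃ r > 0, ∃ C ≥ (0:ℝ), ∀ u ∈ polydisc 2, Vbeta 2 β (Su φ u ∩ ball ζ r) ≤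
      ENNReal.ofReal (C * ∏ i, (1 - ‖u i‖) ^ (β + 2)) := by
  by_cases h0 : ‖φ ζ 0‖ < 1
  · exact local_one hhol hsm hmap β hβ hζ 1 0 (by simp) h0
  by_cases h1 : ‖φ ζ 1‖ < 1
  · exact local_one hhol hsm hmap β hβ hζ 0 1 (by simp) h1
  have hi : ∀ i, ‖φ ζ i‖ = 1 := by
    intro i
    refine le_antisymm (map_Q hsm hmap ζ hζ i) ?_
    fin_cases i
    · exact not_lt.mp h0
    · exact not_lt.mp h1
  have hT := both_unit hhol hsm hmap hinv hζ hi
  have hd := hinv ζ hT hi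
  rw [Matrix.det_fin_two] at hd
  exact local_two hhol hsm hmap β hβ hζ hi hd

lemma global_est (hhol : DifferentiableOn ℂ φ (polydisc 2)) (hsm : ContDiffOn ℝ 2 φ (closedPolydisc 2))
    (hmap : ∀ z ∈ polydisc 2, φ z ∈ polydisc 2) (β : ℝ) (hβ : -1 < β)
    (hinv : ∀ ζ ∈ torus 2, φ ζ ∈ torus 2 →
        Matrix.det (Matrix.of fun i j => jacEntry 2 φ ζ i j) ≠ 0) :
    ∃ C ≥ (0:ℝ), ∀ u ∈ polydisc 2, Vbeta 2 β (Su φ u) ≤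
      ENNReal.ofReal (C * ∏ i, (1 - ‖u i‖) ^ (β + 2)) := by
  have hcompact : IsCompact (closedPolydisc 2) := by
    rw [closedPolydisc_eq]; exact isCompact_closedBall _ _
  have hP : ∃ C ≥ (0:ℝ), ∀ u ∈ polydisc 2, Vbeta 2 β (Su φ u ∩ closedPolydisc 2) ≤
      ENNReal.ofReal (C * ∏ i, (1 - ‖u i‖) ^ (β + 2)) := by
    refine hcompact.induction_on (p := fun s => ∃ C ≥ (0:ℝ), ∀ u ∈ polydisc 2, Vbeta 2 β (Su φ u ∩ s) ≤
      ENNReal.ofReal (C * ∏ i, (1 - ‖u i‖) ^ (β + 2))) ?_ ?_ ?_ ?_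
    · exact ⟨0, le_rfl, by simp⟩
    · rintro s t hst ⟨C, hC, h⟩
      exact ⟨C, hC, fun u hu => (measure_mono (inter_subset_inter_right _ hst)).trans (h u hu)⟩
    · rintro s t ⟨C, hC, h⟩ ⟨C', hC', h'⟩
      refine ⟨C + C', add_nonneg hC hC', fun u hu => ?_⟩
      have hp : 0 ≤ ∏ i, (1 - ‖u i‖) ^ (β + 2) :=
        Finset.prod_nonneg (fun i _ => Real.rpow_nonneg (by linarith [hu i]) _)
      rw [inter_union_distrib_left, add_mul, ENNReal.ofReal_add (by positivity) (by positivity)]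
      exact (measure_union_le _ _).trans (add_le_add (h u hu) (h' u hu))
    · intro ζ hζ
      obtain ⟨r, hr, C, hC, h⟩ := local_all hhol hsm hmap β hβ hinv hζ
      exact ⟨ball ζ r, mem_nhdsWithin_of_mem_nhds (ball_mem_nhds ζ hr), C, hC, h⟩
  obtain ⟨C, hC, h⟩ := hP
  refine ⟨C, hC, fun u hu => ?_⟩
  have : Su φ u ∩ closedPolydisc 2 = Su φ u := inter_eq_left.mpr (fun z hz => subset_Q hz.1)
  rw [← this]; exact h u hu

end

lemma mean_circle (h : ℂ → ℂ) (hd : DifferentiableOn ℂ h (closedBall 0 1)) :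
    ENNReal.ofReal (2 * Real.pi) * ENNReal.ofReal (‖h 0‖ ^ 2) ≤
      ∫⁻ θ in Ioc 0 (2 * Real.pi), ENNReal.ofReal (‖h (circleMap 0 1 θ)‖ ^ 2) := by
  have hd2 : DiffContOnCl ℂ (fun z => h z ^ 2) (ball 0 |1|) := by
    refine ⟨?_, ?_⟩
    · rw [abs_one]; exact ((hd.mono ball_subset_closedBall).pow 2)
    · rw [abs_one, closure_ball _ one_ne_zero]; exact (hd.pow 2).continuousOn
  have h1 := hd2.circleAverage
  rw [Real.circleAverage_def, intervalIntegral.integral_of_le (by positivity)] at h1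
  have h2 : ∫ θ in Ioc 0 (2 * Real.pi), h (circleMap 0 1 θ) ^ 2 = (2 * Real.pi : ℝ) • (h 0 ^ 2) := by
    rw [← h1, smul_smul, mul_inv_cancel₀ (by positivity), one_smul]
  have h3 := enorm_integral_le_lintegral_enorm (μ := volume.restrict (Ioc 0 (2 * Real.pi)))
    (fun θ => h (circleMap 0 1 θ) ^ 2)
  rw [h2, ← ofReal_norm, norm_smul, norm_pow, Real.norm_of_nonneg (by positivity),
    ENNReal.ofReal_mul (by positivity)] at h3
  refine h3.trans (le_of_eq ?_)
  congr 1
  ext θ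
  rw [← ofReal_norm, norm_pow]

/-- boxes -/
def bx (w : Fin 2 → ℂ) (R : Fin 2 → ℝ) : Set (Fin 2 → ℂ) := {u | ∀ i, ‖u i - w i‖ < R i}

lemma bx_open (w : Fin 2 → ℂ) (R : Fin 2 → ℝ) : IsOpen (bx w R) := by
  have : bx w R = ⋂ i, {u : Fin 2 → ℂ | ‖u i - w i‖ < R i} := by ext; simp [bx]
  rw [this]
  exact isOpen_iInter_of_finite (fun i => isOpen_lt (by fun_prop) (by fun_prop))

lemma bx_vol (w : Fin 2 → ℂ) (R : Fin 2 → ℝ) (hR : ∀ i, 0 < R i) :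
    volume (bx w R) = ENNReal.ofReal (∏ i, (Real.pi * R i ^ 2)) := by
  have : bx w R = Set.pi univ (fun i => ball (w i) (R i)) := by
    ext u; simp [bx, dist_eq_norm]
  rw [this, volume_pi_pi, ENNReal.ofReal_prod_of_nonneg (fun i _ => by positivity)]
  refine Finset.prod_congr rfl (fun i _ => ?_)
  rw [Complex.volume_ball, ← ENNReal.ofReal_pow (hR i).le, mul_comm Real.pi,
    ENNReal.ofReal_mul (by positivity)]
  congr 1
  rw [← NNReal.coe_real_pi, ENNReal.ofReal_coe_nnreal]

lemma rot_mp (e : ℂ) (he : ‖e‖ = 1) : MeasurePreserving (fun u : Fin 2 → ℂ => e • u) volume volume := by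
  have h1 : MeasurePreserving (fun u : ℂ => e * u) volume volume := by
    have := (rotation (⟨e, by simpa [Submonoid.unitSphere] using he⟩ : Circle)).measurePreserving
    exact this
  exact volume_preserving_pi (fun _ : Fin 2 => h1)

lemma meas_ind {X Y : Type*} [TopologicalSpace X] [MeasurableSpace X] [OpensMeasurableSpace X]
    [TopologicalSpace Y] [MeasurableSpace Y] [BorelSpace Y] [Zero Y]
    {s : Set X} (hs : MeasurableSet s) {g : X → Y} (hg : ContinuousOn g s) :
    Measurable (s.indicator g) := by
  classical
  rw [← Set.piecewise_eq_indicator]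
  exact hg.measurable_piecewise continuousOn_const hs

lemma sub_mean (f : (Fin 2 → ℂ) → ℂ) (w : Fin 2 → ℂ) (R : Fin 2 → ℝ) (hR : ∀ i, 0 < R i)
    (hf : DifferentiableOn ℂ f (bx w R)) :
    ENNReal.ofReal (‖f w‖ ^ 2) * ENNReal.ofReal (∏ i, (Real.pi * R i ^ 2)) ≤
      ∫⁻ u in bx w R, ENNReal.ofReal (‖f u‖ ^ 2) := by
  set F : (Fin 2 → ℂ) → ℝ≥0∞ := (bx w R).indicator (fun u => ENNReal.ofReal (‖f u‖ ^ 2)) with hF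
  have hFm : Measurable F := by
    refine meas_ind (bx_open w R).measurableSet ?_
    exact ENNReal.continuous_ofReal.comp_continuousOn (hf.continuousOn.norm.pow 2)
  rw [← lintegral_indicator (bx_open w R).measurableSet, ← hF]
  have hbal : ∀ (e : ℂ), ‖e‖ ≤ 1 → ∀ v ∈ bx 0 R, w + e • v ∈ bx w R := by
    intro e he v hv i
    have := hv i
    simp only [Pi.zero_apply, sub_zero] at this
    simp only [Pi.add_apply, Pi.smul_apply, smul_eq_mul, add_sub_cancel_left, norm_mul]
    nlinarith [norm_nonneg (v i)]
  -- pointwise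
  have hpt : ∀ v ∈ bx 0 R, ENNReal.ofReal (2 * Real.pi) * ENNReal.ofReal (‖f w‖ ^ 2) ≤
      ∫⁻ θ in Ioc 0 (2 * Real.pi), F (w + circleMap 0 1 θ • v) := by
    intro v hv
    have hd : DifferentiableOn ℂ (fun l : ℂ => f (w + l • v)) (closedBall 0 1) := by
      refine hf.comp (f := fun l : ℂ => w + l • v) (by fun_prop) ?_
      intro l hl
      exact hbal l (by simpa using hl) v hv
    have := mean_circle _ hd
    simp only [zero_smul, add_zero] at this
    refine this.trans (le_of_eq ?_)
    congr 1; ext θ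
    rw [hF, indicator_of_mem (hbal _ (by simp [circleMap]) v hv)]
  have hrot : ∀ θ : ℝ, ∫⁻ v, F (w + circleMap 0 1 θ • v) = ∫⁻ u, F u := by
    intro θ
    have h1 := (rot_mp (circleMap 0 1 θ) (by simp [circleMap])).lintegral_comp
      (f := fun v => F (w + v)) (hFm.comp (measurable_const_add w))
    rw [h1, lintegral_add_left_eq_self]
  have hm : Measurable (Function.uncurry fun (v : Fin 2 → ℂ) (θ : ℝ) => F (w + circleMap 0 1 θ • v)) := by
    apply hFm.comp
    apply Continuous.measurable
    have : Continuous (circleMap 0 1) := continuous_circleMap 0 1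
    fun_prop
  have key : ENNReal.ofReal (2 * Real.pi) * ENNReal.ofReal (‖f w‖ ^ 2) * volume (bx 0 R) ≤
      ENNReal.ofReal (2 * Real.pi) * ∫⁻ u, F u := by
    calc _ = ∫⁻ v in bx 0 R, ENNReal.ofReal (2 * Real.pi) * ENNReal.ofReal (‖f w‖ ^ 2) := by
          rw [setLIntegral_const]
      _ ≤ ∫⁻ v in bx 0 R, ∫⁻ θ in Ioc 0 (2 * Real.pi), F (w + circleMap 0 1 θ • v) :=
          setLIntegral_mono' (bx_open 0 R).measurableSet hpt
      _ ≤ ∫⁻ v, ∫⁻ θ in Ioc 0 (2 * Real.pi), F (w + circleMap 0 1 θ • v) := setLIntegral_le_lintegral _ _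
      _ = ∫⁻ θ in Ioc 0 (2 * Real.pi), ∫⁻ v, F (w + circleMap 0 1 θ • v) :=
          lintegral_lintegral_swap hm.aemeasurable
      _ = ∫⁻ θ in Ioc 0 (2 * Real.pi), ∫⁻ u, F u := by simp_rw [hrot]
      _ = _ := by
          rw [setLIntegral_const, Real.volume_Ioc, sub_zero, mul_comm]
  rw [bx_vol 0 R hR, mul_assoc] at key
  exact (ENNReal.mul_le_mul_iff_right (by simp [Real.pi_pos]) ENNReal.ofReal_ne_top).mp key

lemma meas_polydisc : MeasurableSet (polydisc 2) := by
  rw [polydisc_eq_ball]; exact measurableSet_ball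

lemma lintegral_Vbeta (β : ℝ) (g : (Fin 2 → ℂ) → ℝ≥0∞) : ∫⁻ z, g z ∂(Vbeta 2 β) =
    ∫⁻ z in polydisc 2, ENNReal.ofReal (∏ j, ((β + 1) * (1 - ‖z j‖ ^ 2) ^ β / Real.pi)) * g z := by
  rw [Vbeta, lintegral_withDensity_eq_lintegral_mul_non_measurable _ ?_ ?_]
  · rfl
  · apply Measurable.ennreal_ofReal
    fun_prop
  · exact Filter.Eventually.of_forall (fun _ => ENNReal.ofReal_lt_top)

lemma Vbeta_ae (β : ℝ) : ∀ᵐ z ∂(Vbeta 2 β), z ∈ polydisc 2 := by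
  have : Vbeta 2 β ≪ volume.restrict (polydisc 2) := withDensity_absolutelyContinuous _ _
  exact this.ae_le (ae_restrict_mem meas_polydisc)

instance (β : ℝ) : SFinite (Vbeta 2 β) := by unfold Vbeta; infer_instance

lemma weight_cmp (β : ℝ) (t : ℝ) (h0 : 0 ≤ t) (h1 : t < 1) :
    (1 - t) ^ β ≤ 2 ^ |β| * (1 - t ^ 2) ^ β := by
  have e : 1 - t ^ 2 = (1 - t) * (1 + t) := by ring
  rw [e, Real.mul_rpow (by linarith) (by linarith)]
  have h : 1 ≤ 2 ^ |β| * (1 + t) ^ β := by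
    rcases le_total 0 β with hb | hb
    · have := Real.one_le_rpow (x := 1 + t) (by linarith) hb
      have := Real.one_le_rpow (x := 2) (by norm_num) (abs_nonneg β)
      nlinarith
    · rw [abs_of_nonpos hb]
      have : (2:ℝ) ^ β ≤ (1 + t) ^ β := Real.rpow_le_rpow_of_nonpos (by linarith) (by linarith) hb
      have h2 : (2:ℝ) ^ (-β) * 2 ^ β = 1 := by rw [← Real.rpow_add (by norm_num)]; simp
      have h3 : (0:ℝ) ≤ 2 ^ (-β) := by positivity
      have := mul_le_mul_of_nonneg_left this h3
      linarith
  have := Real.rpow_nonneg (show 0 ≤ 1 - t by linarith) β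
  nlinarith

section
variable {φ : (Fin 2 → ℂ) → (Fin 2 → ℂ)}

/-- kernel weight -/
def gw (u : Fin 2 → ℂ) : ℝ := ∏ i, (25 / (Real.pi * (1 - ‖u i‖) ^ 2))

lemma gw_meas : Measurable gw := by unfold gw; fun_prop

lemma pw_bound (hmap : ∀ z ∈ polydisc 2, φ z ∈ polydisc 2)
    (f : (Fin 2 → ℂ) → ℂ) (hf : DifferentiableOn ℂ f (polydisc 2)) (z : Fin 2 → ℂ) (hz : z ∈ polydisc 2) :
    ENNReal.ofReal (‖f (φ z)‖ ^ 2) ≤ ∫⁻ u in polydisc 2,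
      {u | z ∈ Su φ u}.indicator (fun u => ENNReal.ofReal (gw u) * ENNReal.ofReal (‖f u‖ ^ 2)) u := by
  set w := φ z with hw
  have hwp : ∀ i, ‖w i‖ < 1 := hmap z hz
  set R : Fin 2 → ℝ := fun i => (1 - ‖w i‖) / 4 with hRdef
  have hR : ∀ i, 0 < R i := fun i => by have := hwp i; simp only [hRdef]; linarith
  have hb : ∀ u ∈ bx w R, ∀ i, ‖u i‖ < 1 ∧ 1 - ‖u i‖ ≤ 5 * R i ∧ ‖w i - u i‖ ≤ (1 - ‖u i‖) / 2 := by
    intro u hu i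
    have h1 := hu i
    have h2 := norm_sub_norm_le (u i) (w i)
    have h3 := norm_sub_norm_le (w i) (u i)
    rw [norm_sub_rev (w i)] at h3 ⊢
    have h4 : R i = (1 - ‖w i‖) / 4 := rfl
    have := hwp i
    refine ⟨by linarith, by linarith, by linarith⟩
  have hbp : bx w R ⊆ polydisc 2 := fun u hu i => (hb u hu i).1
  have hs := sub_mean f w R hR (hf.mono hbp)
  set P := ∏ i, (Real.pi * R i ^ 2) with hP
  have hP0 : 0 < P := Finset.prod_pos (fun i _ => by have := hR i; positivity)
  have h1 : ENNReal.ofReal (‖f w‖ ^ 2) ≤ ENNReal.ofReal P⁻¹ * ∫⁻ u in bx w R, ENNReal.ofReal (‖f u‖ ^ 2) := by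
    calc ENNReal.ofReal (‖f w‖ ^ 2) = ENNReal.ofReal P⁻¹ * (ENNReal.ofReal (‖f w‖ ^ 2) * ENNReal.ofReal P) := by
          rw [mul_comm, mul_assoc, ← ENNReal.ofReal_mul hP0.le, mul_inv_cancel₀ hP0.ne', ENNReal.ofReal_one, mul_one]
      _ ≤ _ := by gcongr
  refine h1.trans ?_
  rw [← lintegral_const_mul' _ _ ENNReal.ofReal_ne_top]
  refine le_trans ?_ (lintegral_mono_set hbp)
  refine setLIntegral_mono' (bx_open w R).measurableSet (fun u hu => ?_)
  rw [indicator_of_mem (show u ∈ {u | z ∈ Su φ u} from ⟨hz, fun i => (hb u hu i).2.2⟩)]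
  gcongr
  rw [hP, ← Finset.prod_inv_distrib, gw]
  refine Finset.prod_le_prod (fun i _ => by have := hR i; positivity) (fun i _ => ?_)
  obtain ⟨a, b, _⟩ := hb u hu i
  have hRi := hR i
  have a' : 0 < 1 - ‖u i‖ := by linarith
  rw [inv_eq_one_div, div_le_div_iff₀ (by positivity) (by positivity)]
  have : (1 - ‖u i‖) ^ 2 ≤ (5 * R i) ^ 2 := by gcongr
  nlinarith [Real.pi_pos]

lemma meas_rel (hsm : ContDiffOn ℝ 2 φ (closedPolydisc 2)) :
    MeasurableSet {p : (Fin 2 → ℂ) × (Fin 2 → ℂ) | p.1 ∈ Su φ p.2} := by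
  have hφ : Measurable ((polydisc 2).indicator φ) := meas_ind meas_polydisc (hsm.continuousOn.mono subset_Q)
  have : {p : (Fin 2 → ℂ) × (Fin 2 → ℂ) | p.1 ∈ Su φ p.2} = (Prod.fst ⁻¹' polydisc 2) ∩
      ⋂ i, {p : (Fin 2 → ℂ) × (Fin 2 → ℂ) | ‖(polydisc 2).indicator φ p.1 i - p.2 i‖ ≤ (1 - ‖p.2 i‖) / 2} := by
    ext ⟨z, u⟩
    constructor
    · rintro ⟨h1, h2⟩
      refine ⟨h1, mem_iInter.mpr (fun i => ?_)⟩
      change ‖(polydisc 2).indicator φ z i - u i‖ ≤ (1 - ‖u i‖) / 2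
      rw [indicator_of_mem h1]; exact h2 i
    · rintro ⟨h1, h2⟩
      refine ⟨h1, fun i => ?_⟩
      have h3 : ‖(polydisc 2).indicator φ z i - u i‖ ≤ (1 - ‖u i‖) / 2 := mem_iInter.mp h2 i
      rwa [indicator_of_mem (show z ∈ polydisc 2 from h1)] at h3
  rw [this]
  refine (measurable_fst meas_polydisc).inter (MeasurableSet.iInter fun i => ?_)
  have h1 : Measurable (fun p : (Fin 2 → ℂ) × (Fin 2 → ℂ) => (polydisc 2).indicator φ p.1 i) :=
    (measurable_pi_apply i).comp (hφ.comp measurable_fst)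
  exact measurableSet_le (by fun_prop) (by fun_prop)

theorem sufficiency (hhol : DifferentiableOn ℂ φ (polydisc 2)) (hsm : ContDiffOn ℝ 2 φ (closedPolydisc 2))
    (hmap : ∀ z ∈ polydisc 2, φ z ∈ polydisc 2) (β : ℝ) (hβ : -1 < β)
    (hinv : ∀ ζ ∈ torus 2, φ ζ ∈ torus 2 →
        Matrix.det (Matrix.of fun i j => jacEntry 2 φ ζ i j) ≠ 0) : bddBergman 2 β φ := by
  obtain ⟨C, hC, hV⟩ := global_est hhol hsm hmap β hβ hinv
  have hb1 : 0 < β + 1 := by linarith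
  set A : ℝ := 25 * 2 ^ |β| / (β + 1) with hA
  have hA0 : 0 < A := by positivity
  refine ⟨C * A ^ 2 + 1, by positivity, fun f hf => ?_⟩
  set F : (Fin 2 → ℂ) → ℝ≥0∞ := (polydisc 2).indicator (fun u => ENNReal.ofReal (‖f u‖ ^ 2)) with hF
  have hFm : Measurable F :=
    meas_ind meas_polydisc (ENNReal.continuous_ofReal.comp_continuousOn (hf.continuousOn.norm.pow 2))
  set T : (Fin 2 → ℂ) → (Fin 2 → ℂ) → ℝ≥0∞ := fun z u =>
    {p : (Fin 2 → ℂ) × (Fin 2 → ℂ) | p.1 ∈ Su φ p.2}.indicator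
      (fun p => ENNReal.ofReal (gw p.2) * F p.2) (z, u) with hT
  have hTm : Measurable (Function.uncurry T) := by
    have : Function.uncurry T = {p : (Fin 2 → ℂ) × (Fin 2 → ℂ) | p.1 ∈ Su φ p.2}.indicator
      (fun p => ENNReal.ofReal (gw p.2) * F p.2) := by ext ⟨z, u⟩; rfl
    rw [this]
    exact Measurable.indicator (((gw_meas.comp measurable_snd).ennreal_ofReal).mul (hFm.comp measurable_snd))
      (meas_rel hsm)
  have step1 : ∫⁻ z, ENNReal.ofReal (‖f (φ z)‖ ^ 2) ∂(Vbeta 2 β) ≤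
      ∫⁻ z, (∫⁻ u in polydisc 2, T z u) ∂(Vbeta 2 β) := by
    refine lintegral_mono_ae ?_
    filter_upwards [Vbeta_ae β] with z hz
    refine (pw_bound hmap f hf z hz).trans (le_of_eq ?_)
    refine setLIntegral_congr_fun meas_polydisc (fun u hu => ?_)
    simp only [hT]
    by_cases h : z ∈ Su φ u
    · rw [indicator_of_mem (show u ∈ {u | z ∈ Su φ u} from h),
        indicator_of_mem (show (z, u) ∈ {p : (Fin 2 → ℂ) × (Fin 2 → ℂ) | p.1 ∈ Su φ p.2} from h), hF,
        indicator_of_mem hu]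
    · rw [indicator_of_notMem (show u ∉ {u | z ∈ Su φ u} from h),
        indicator_of_notMem (show (z, u) ∉ {p : (Fin 2 → ℂ) × (Fin 2 → ℂ) | p.1 ∈ Su φ p.2} from h)]
  refine step1.trans ?_
  rw [lintegral_lintegral_swap hTm.aemeasurable]
  have step2 : ∀ u, ∫⁻ z, T z u ∂(Vbeta 2 β) = ENNReal.ofReal (gw u) * F u * Vbeta 2 β (Su φ u) := by
    intro u
    have : (fun z => T z u) = (Su φ u).indicator (fun _ => ENNReal.ofReal (gw u) * F u) := by
      ext z
      simp only [hT]
      by_cases h : z ∈ Su φ u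
      · rw [indicator_of_mem h,
          indicator_of_mem (show (z, u) ∈ {p : (Fin 2 → ℂ) × (Fin 2 → ℂ) | p.1 ∈ Su φ p.2} from h)]
      · rw [indicator_of_notMem h,
          indicator_of_notMem (show (z, u) ∉ {p : (Fin 2 → ℂ) × (Fin 2 → ℂ) | p.1 ∈ Su φ p.2} from h)]
    rw [this, lintegral_indicator_const (Su_meas hsm u)]
  simp_rw [step2]
  rw [lintegral_Vbeta, ← lintegral_const_mul' _ _ ENNReal.ofReal_ne_top]
  refine setLIntegral_mono' meas_polydisc (fun u hu => ?_)
  rw [hF, indicator_of_mem hu]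
  have hgw : 0 ≤ gw u := Finset.prod_nonneg (fun i _ => by have := Real.pi_pos; positivity)
  have hden : 0 ≤ ∏ j, ((β + 1) * (1 - ‖u j‖ ^ 2) ^ β / Real.pi) := by
    refine Finset.prod_nonneg (fun i _ => ?_)
    have h1 : 0 ≤ 1 - ‖u i‖ ^ 2 := by nlinarith [hu i, norm_nonneg (u i)]
    have := Real.rpow_nonneg h1 β
    have := Real.pi_pos
    positivity
  calc ENNReal.ofReal (gw u) * ENNReal.ofReal (‖f u‖ ^ 2) * Vbeta 2 β (Su φ u)
      ≤ ENNReal.ofReal (gw u) * ENNReal.ofReal (‖f u‖ ^ 2) *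
          ENNReal.ofReal (C * ∏ i, (1 - ‖u i‖) ^ (β + 2)) := by gcongr; exact hV u hu
    _ = ENNReal.ofReal (gw u * (C * ∏ i, (1 - ‖u i‖) ^ (β + 2))) * ENNReal.ofReal (‖f u‖ ^ 2) := by
        rw [ENNReal.ofReal_mul hgw]; ring
    _ ≤ ENNReal.ofReal ((C * A ^ 2 + 1) * ∏ j, ((β + 1) * (1 - ‖u j‖ ^ 2) ^ β / Real.pi)) *
          ENNReal.ofReal (‖f u‖ ^ 2) := by
        refine mul_le_mul' (ENNReal.ofReal_le_ofReal ?_) le_rfl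
        have e1 : gw u * ∏ i, (1 - ‖u i‖) ^ (β + 2) ≤
            A ^ 2 * ∏ j, ((β + 1) * (1 - ‖u j‖ ^ 2) ^ β / Real.pi) := by
          have : A ^ 2 = ∏ _j : Fin 2, A := by simp
          rw [this, gw, ← Finset.prod_mul_distrib, ← Finset.prod_mul_distrib]
          refine Finset.prod_le_prod (fun i _ => ?_) (fun i _ => ?_)
          · have h1 : 0 < 1 - ‖u i‖ := by linarith [hu i]
            have := Real.pi_pos
            positivity
          · have h1 : 0 < 1 - ‖u i‖ := by linarith [hu i]
            have hp := Real.pi_pos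
            have hc := weight_cmp β ‖u i‖ (norm_nonneg _) (hu i)
            have e3 : (1 - ‖u i‖) ^ (β + 2) = (1 - ‖u i‖) ^ β * (1 - ‖u i‖) ^ 2 := by
              rw [Real.rpow_add h1]; norm_num
            rw [e3, hA]
            have l : 25 / (Real.pi * (1 - ‖u i‖) ^ 2) * ((1 - ‖u i‖) ^ β * (1 - ‖u i‖) ^ 2) =
                25 / Real.pi * (1 - ‖u i‖) ^ β := by field_simp
            have r : 25 * 2 ^ |β| / (β + 1) * ((β + 1) * (1 - ‖u i‖ ^ 2) ^ β / Real.pi) =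
                25 / Real.pi * (2 ^ |β| * (1 - ‖u i‖ ^ 2) ^ β) := by field_simp
            rw [l, r]
            gcongr
        nlinarith [mul_le_mul_of_nonneg_left e1 hC]
    _ = _ := by
        rw [ENNReal.ofReal_mul (by positivity), mul_assoc]

end

lemma conj_mul_unit {x : ℂ} (hx : ‖x‖ = 1) : conj x * x = 1 := by
  rw [mul_comm, Complex.mul_conj, Complex.normSq_eq_norm_sq, hx]; simp

lemma pt_bounds (δ s : ℝ) (hδ : 0 < δ) (hδ1 : δ ≤ 1 / 9) (hs : s ^ 2 ≤ δ) (e : ℂ) (he : ‖e‖ < δ / 4) :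
    δ ≤ 1 - ‖(1 : ℂ) - 4 * δ - Complex.I * s + e‖ ^ 2 ∧
    1 - ‖(1 : ℂ) - 4 * δ - Complex.I * s + e‖ ^ 2 ≤ 10 * δ := by
  have h1 := (abs_le.mp ((Complex.abs_re_le_norm e).trans he.le))
  have h2 := (abs_le.mp ((Complex.abs_im_le_norm e).trans he.le))
  rw [Complex.sq_norm, Complex.normSq_apply]
  have er : ((1 : ℂ) - 4 * δ - Complex.I * s + e).re = 1 - 4 * δ + e.re := by simp
  have ei : ((1 : ℂ) - 4 * δ - Complex.I * s + e).im = - s + e.im := by simp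
  rw [er, ei]
  set x := e.re
  set y := e.im
  have hy : y ^ 2 ≤ δ ^ 2 / 16 := by nlinarith
  have hx : (4 * δ - x) ^ 2 ≤ (17 / 4 * δ) ^ 2 := by
    apply sq_le_sq'
    · linarith
    · linarith
  have hd : δ ^ 2 ≤ δ / 9 := by nlinarith
  have hb : (- s + y) ^ 2 ≤ 2 * s ^ 2 + 2 * y ^ 2 := by nlinarith [sq_nonneg (s + y)]
  constructor
  · nlinarith
  · nlinarith [sq_nonneg (4 * δ - x), sq_nonneg (- s + y)]

lemma sq_dist_bound (δ s : ℝ) (hδ : 0 < δ) (hδ1 : δ ≤ 1 / 9) (hs : s ^ 2 ≤ δ) (e : ℂ) (he : ‖e‖ < δ / 4) :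
    ‖-(4 * δ : ℂ) - Complex.I * s + e‖ ^ 2 ≤ 7 * δ := by
  have h1 : ‖-(4 * δ : ℂ) - Complex.I * s + e‖ ≤ 17 / 4 * δ + |s| := by
    have a := norm_add_le (-(4 * δ : ℂ) - Complex.I * s) e
    have b := norm_sub_le (-(4 * δ : ℂ)) (Complex.I * s)
    have c : ‖-(4 * δ : ℂ)‖ = 4 * δ := by simp [abs_of_pos hδ]
    have d : ‖Complex.I * (s : ℂ)‖ = |s| := by simp
    linarith
  have h2 : ‖-(4 * δ : ℂ) - Complex.I * s + e‖ ^ 2 ≤ (17 / 4 * δ + |s|) ^ 2 := by gcongr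
  have h3 : |s| ^ 2 ≤ δ := by rwa [sq_abs]
  have hd : δ ^ 2 ≤ δ / 9 := by nlinarith
  nlinarith [sq_nonneg (17 / 4 * δ - |s|)]

lemma rpow_lower (β δ x : ℝ) (hδ : 0 < δ) (h1 : δ ≤ x) (h2 : x ≤ 10 * δ) :
    min 1 ((10:ℝ) ^ β) * δ ^ β ≤ x ^ β := by
  have hp : 0 < δ ^ β := Real.rpow_pos_of_pos hδ β
  rcases le_total 0 β with hb | hb
  · have := Real.rpow_le_rpow hδ.le h1 hb
    have := min_le_left 1 ((10:ℝ) ^ β)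
    nlinarith
  · have := Real.rpow_le_rpow_of_nonpos (by linarith) h2 hb
    rw [Real.mul_rpow (by norm_num) hδ.le] at this
    have := min_le_right 1 ((10:ℝ) ^ β)
    nlinarith

lemma real_kernel (a : Fin 2 → Fin 2 → ℝ) (h : a 0 0 * a 1 1 - a 0 1 * a 1 0 = 0) :
    ∃ v : Fin 2 → ℝ, (∀ j, |v j| ≤ 1) ∧ (∃ j, |v j| = 1) ∧ ∀ i, ∑ j, a i j * v j = 0 := by
  obtain ⟨v, hv, hav⟩ := (Matrix.exists_mulVec_eq_zero_iff (M := Matrix.of a)).mpr (by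
    rw [Matrix.det_fin_two]; exact h)
  have hav' : ∀ i, ∑ j, a i j * v j = 0 := fun i => congrFun hav i
  obtain ⟨j0, hj0⟩ : ∃ j0, ∀ j, |v j| ≤ |v j0| := by
    obtain ⟨j0, _, h⟩ := Finset.exists_max_image Finset.univ (fun j => |v j|) ⟨0, Finset.mem_univ _⟩
    exact ⟨j0, fun j => h j (Finset.mem_univ _)⟩
  have hpos : 0 < |v j0| := by
    by_contra hc
    apply hv
    ext j
    have := hj0 j
    have h2 : |v j| = 0 := le_antisymm (by linarith) (abs_nonneg _)
    simpa using h2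
  refine ⟨fun j => v j / |v j0|, fun j => ?_, ⟨j0, ?_⟩, fun i => ?_⟩
  · rw [abs_div, abs_abs, div_le_one hpos]; exact hj0 j
  · rw [abs_div, abs_abs, div_self hpos.ne']
  · have := hav' i
    simp_rw [← mul_div_assoc]
    rw [← Finset.sum_div, this, zero_div]

section
variable {φ : (Fin 2 → ℂ) → (Fin 2 → ℂ)}

lemma kernel_vec (hhol : DifferentiableOn ℂ φ (polydisc 2)) (hsm : ContDiffOn ℝ 2 φ (closedPolydisc 2))
    (hmap : ∀ z ∈ polydisc 2, φ z ∈ polydisc 2) {ζ : Fin 2 → ℂ} (hζ : ζ ∈ torus 2) (hη : φ ζ ∈ torus 2)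
    (hdet : Matrix.det (Matrix.of fun i j => jacEntry 2 φ ζ i j) = 0) :
    ∃ v : Fin 2 → ℝ, (∀ j, |v j| ≤ 1) ∧ (∃ j, |v j| = 1) ∧
      ∀ i, ∑ j, jacEntry 2 φ ζ i j * (ζ j * v j) = 0 := by
  have hζQ : ζ ∈ closedPolydisc 2 := fun j => (hζ j).le
  have hr := fun i j => bdry_real hhol hsm hmap hζQ i j (hη i)
  rw [Matrix.det_fin_two] at hdet
  simp only [Matrix.of_apply] at hdet
  obtain ⟨v, h1, h2, h3⟩ := real_kernel (fun i j => ‖jacEntry 2 φ ζ i j‖) (by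
    have : ((‖jacEntry 2 φ ζ 0 0‖ * ‖jacEntry 2 φ ζ 1 1‖ - ‖jacEntry 2 φ ζ 0 1‖ * ‖jacEntry 2 φ ζ 1 0‖ : ℝ) : ℂ) = 0 := by
      push_cast
      rw [← hr, ← hr, ← hr, ← hr]
      linear_combination (conj (φ ζ 0) * conj (φ ζ 1) * ζ 0 * ζ 1) * hdet
    exact_mod_cast this)
  refine ⟨v, h1, h2, fun i => ?_⟩
  have h4 : (∑ j, (‖jacEntry 2 φ ζ i j‖ : ℂ) * (v j : ℂ)) = 0 := by exact_mod_cast h3 i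
  have h5 : conj (φ ζ i) * ∑ j, jacEntry 2 φ ζ i j * (ζ j * v j) = 0 := by
    rw [← h4, Finset.mul_sum]
    refine Finset.sum_congr rfl (fun j _ => ?_)
    rw [← hr]; ring
  have h6 : conj (φ ζ i) ≠ 0 := by
    intro h; have := hη i
    rw [← RCLike.norm_conj, h] at this; simp at this
  exact (mul_eq_zero.mp h5).resolve_left h6

lemma test_upper (β : ℝ) (hβ : -1 < β) (M : ℕ) (hM : β + 2 ≤ M) : ∃ B : ℝ, 0 ≤ B ∧
    ∀ δ : ℝ, 0 < δ → δ ≤ 1 → ∀ η ∈ torus 2,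
    ∫⁻ w, ENNReal.ofReal (∏ i, (‖1 - conj (((1 - δ : ℝ) : ℂ) * η i) * w i‖ ^ (2 * M))⁻¹) ∂(Vbeta 2 β) ≤
      ENNReal.ofReal ((B * (δ ^ (β + 2) * (δ ^ (2 * M))⁻¹)) ^ 2) := by
  set m := (muB β univ).toReal with hm
  have hfin := muB_finite β hβ
  have hm' : muB β univ = ENNReal.ofReal m := (ENNReal.ofReal_toReal hfin.ne).symm
  have hm0 : 0 ≤ m := ENNReal.toReal_nonneg
  refine ⟨2 ^ (2 * M - 2 * β - 4 : ℝ) * m, by positivity, fun δ hδ hδ1 η hη => ?_⟩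
  have h1 : ∀ i, ∫⁻ w, ENNReal.ofReal ((‖1 - conj (((1 - δ : ℝ) : ℂ) * η i) * w‖ ^ (2 * M))⁻¹) ∂(muB β) ≤
      ENNReal.ofReal (2 ^ (2 * M - 2 * β - 4 : ℝ) * m * (δ ^ (β + 2) * (δ ^ (2 * M))⁻¹)) := by
    intro i
    have hna : ‖((1 - δ : ℝ) : ℂ) * η i‖ = 1 - δ := by
      rw [norm_mul, hη i, Complex.norm_real, Real.norm_of_nonneg (by linarith), mul_one]
    refine (forelli_rudin β hβ M hM (a := ((1 - δ : ℝ) : ℂ) * η i) (by rw [hna]; linarith)).trans ?_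
    rw [hm', ← ENNReal.ofReal_mul (by
      have : 0 ≤ 1 - ‖((1 - δ : ℝ) : ℂ) * η i‖ ^ 2 := by rw [hna]; nlinarith
      positivity), hna]
    apply ENNReal.ofReal_le_ofReal
    have e1 : (1 - (1 - δ) ^ 2) ^ (β + 2 - 2 * M) ≤ δ ^ (β + 2 - 2 * M) :=
      Real.rpow_le_rpow_of_nonpos hδ (by nlinarith) (by linarith [(Nat.cast_nonneg M : (0:ℝ) ≤ M)])
    have e2 : δ ^ (β + 2 - 2 * M) = δ ^ (β + 2) * (δ ^ (2 * M))⁻¹ := by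
      rw [Real.rpow_sub hδ, div_eq_mul_inv]
      congr 2
      exact_mod_cast Real.rpow_natCast δ (2 * M)
    rw [e2] at e1
    have e3 : (0:ℝ) ≤ 2 ^ (2 * M - 2 * β - 4 : ℝ) * m := by positivity
    nlinarith [mul_le_mul_of_nonneg_left e1 e3]
  have hg : ∀ i, Measurable (fun w : ℂ => ENNReal.ofReal ((‖1 - conj (((1 - δ : ℝ) : ℂ) * η i) * w‖ ^ (2 * M))⁻¹)) := by
    intro i
    apply Measurable.ennreal_ofReal
    fun_prop
  have h2 := (Vbeta_mp β hβ).lintegral_comp (f := fun p : ℂ × ℂ =>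
    ENNReal.ofReal ((‖1 - conj (((1 - δ : ℝ) : ℂ) * η 0) * p.1‖ ^ (2 * M))⁻¹) *
    ENNReal.ofReal ((‖1 - conj (((1 - δ : ℝ) : ℂ) * η 1) * p.2‖ ^ (2 * M))⁻¹))
    (((hg 0).comp measurable_fst).mul ((hg 1).comp measurable_snd))
  rw [lintegral_prod_mul (hg 0).aemeasurable (hg 1).aemeasurable] at h2
  have h3 : ∫⁻ w, ENNReal.ofReal (∏ i, (‖1 - conj (((1 - δ : ℝ) : ℂ) * η i) * w i‖ ^ (2 * M))⁻¹) ∂(Vbeta 2 β) =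
      ∫⁻ a, ENNReal.ofReal ((‖1 - conj (((1 - δ : ℝ) : ℂ) * η 0) * ((MeasurableEquiv.piFinTwo fun _ => ℂ) a).1‖ ^ (2 * M))⁻¹) *
    ENNReal.ofReal ((‖1 - conj (((1 - δ : ℝ) : ℂ) * η 1) * ((MeasurableEquiv.piFinTwo fun _ => ℂ) a).2‖ ^ (2 * M))⁻¹) ∂(Vbeta 2 β) := by
    congr 1; ext w
    rw [Fin.prod_univ_two, ENNReal.ofReal_mul (by positivity)]
    rfl
  rw [h3, h2, sq, ENNReal.ofReal_mul (by positivity)]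
  exact mul_le_mul' (h1 0) (h1 1)

end

/-- centers -/
def ctr (ζ : Fin 2 → ℂ) (δ : ℝ) (s : Fin 2 → ℝ) : Fin 2 → ℂ :=
  fun j => ζ j * (1 - 4 * (δ : ℂ) - Complex.I * (s j : ℂ))

lemma ctr_repr {ζ : Fin 2 → ℂ} (hζ : ζ ∈ torus 2) (δ : ℝ) (s : Fin 2 → ℝ) {z : Fin 2 → ℂ}
    (hz : z ∈ bx (ctr ζ δ s) (fun _ => δ / 4)) :
    ∃ e : Fin 2 → ℂ, (∀ j, ‖e j‖ < δ / 4) ∧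
      ∀ j, z j = ζ j * (1 - 4 * (δ : ℂ) - Complex.I * (s j : ℂ) + e j) := by
  refine ⟨fun j => conj (ζ j) * (z j - ctr ζ δ s j), fun j => ?_, fun j => ?_⟩
  · have := hz j
    rwa [norm_mul, RCLike.norm_conj, hζ j, one_mul]
  · have := conj_mul_unit (hζ j)
    simp only [ctr]
    linear_combination (z j - ζ j * (1 - 4 * (δ : ℂ) - Complex.I * (s j : ℂ))) * (-this)

lemma ctr_norm {ζ : Fin 2 → ℂ} (hζ : ζ ∈ torus 2) {δ : ℝ} {s : Fin 2 → ℝ} (hδ : 0 < δ) (hδ1 : δ ≤ 1 / 9)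
    (hs : ∀ j, s j ^ 2 ≤ δ) {z : Fin 2 → ℂ} (hz : z ∈ bx (ctr ζ δ s) (fun _ => δ / 4)) (j : Fin 2) :
    δ ≤ 1 - ‖z j‖ ^ 2 ∧ 1 - ‖z j‖ ^ 2 ≤ 10 * δ := by
  obtain ⟨e, he, hze⟩ := ctr_repr hζ δ s hz
  rw [hze j, norm_mul, hζ j, one_mul]
  exact pt_bounds δ (s j) hδ hδ1 (hs j) (e j) (he j)

lemma ctr_sub {ζ : Fin 2 → ℂ} (hζ : ζ ∈ torus 2) {δ : ℝ} {s : Fin 2 → ℝ} (hδ : 0 < δ) (hδ1 : δ ≤ 1 / 9)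
    (hs : ∀ j, s j ^ 2 ≤ δ) : bx (ctr ζ δ s) (fun _ => δ / 4) ⊆ polydisc 2 := by
  intro z hz j
  have := (ctr_norm hζ hδ hδ1 hs hz j).1
  nlinarith [norm_nonneg (z j)]

lemma ctr_meas (β : ℝ) (hβ : -1 < β) {ζ : Fin 2 → ℂ} (hζ : ζ ∈ torus 2) {δ : ℝ} {s : Fin 2 → ℝ}
    (hδ : 0 < δ) (hδ1 : δ ≤ 1 / 9) (hs : ∀ j, s j ^ 2 ≤ δ) :
    ENNReal.ofReal (((β + 1) * min 1 ((10:ℝ) ^ β) / 16 * δ ^ (β + 2)) ^ 2) ≤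
      Vbeta 2 β (bx (ctr ζ δ s) (fun _ => δ / 4)) := by
  set S := bx (ctr ζ δ s) (fun _ => δ / 4) with hS
  have hSm : MeasurableSet S := (bx_open _ _).measurableSet
  have hb1 : 0 < β + 1 := by linarith
  set m := min 1 ((10:ℝ) ^ β) with hm
  have hm0 : 0 < m := lt_min one_pos (by positivity)
  have hp := Real.pi_pos
  rw [Vbeta, withDensity_apply _ hSm, Measure.restrict_restrict hSm,
    inter_eq_left.mpr (ctr_sub hζ hδ hδ1 hs)]
  have h1 : ∀ z ∈ S, ENNReal.ofReal (((β + 1) * (m * δ ^ β) / Real.pi) ^ 2) ≤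
      ENNReal.ofReal (∏ j, ((β + 1) * (1 - ‖z j‖ ^ 2) ^ β / Real.pi)) := by
    intro z hz
    apply ENNReal.ofReal_le_ofReal
    have : ((β + 1) * (m * δ ^ β) / Real.pi) ^ 2 = ∏ _j : Fin 2, ((β + 1) * (m * δ ^ β) / Real.pi) := by
      rw [Fin.prod_univ_two, sq]
    rw [this]
    refine Finset.prod_le_prod (fun i _ => by positivity) (fun i _ => ?_)
    obtain ⟨a, b⟩ := ctr_norm hζ hδ hδ1 hs hz i
    have := rpow_lower β δ _ hδ a b
    gcongr
  refine le_trans (le_of_eq ?_) (setLIntegral_mono' hSm h1)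
  rw [setLIntegral_const, bx_vol _ _ (fun _ => by positivity), ← ENNReal.ofReal_mul (by positivity)]
  congr 1
  rw [Fin.prod_univ_two, Real.rpow_add hδ]
  norm_num
  field_simp
  norm_num

lemma ctr_disj {ζ : Fin 2 → ℂ} (hζ : ζ ∈ torus 2) {δ : ℝ} (hδ : 0 < δ) {v : Fin 2 → ℝ}
    (hv : ∃ j, |v j| = 1) {k l : ℕ} (hkl : k ≠ l) :
    Disjoint (bx (ctr ζ δ (fun j => k * δ * v j)) (fun _ => δ / 4))
      (bx (ctr ζ δ (fun j => l * δ * v j)) (fun _ => δ / 4)) := by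
  rw [Set.disjoint_left]
  intro z h1 h2
  obtain ⟨j, hj⟩ := hv
  have a1 := h1 j
  have a2 := h2 j
  have a3 := norm_sub_le (z j - ctr ζ δ (fun j => k * δ * v j) j) (z j - ctr ζ δ (fun j => l * δ * v j) j)
  have e : z j - ctr ζ δ (fun j => k * δ * v j) j - (z j - ctr ζ δ (fun j => l * δ * v j) j) =
      ζ j * (Complex.I * ((((k : ℝ) - l) * δ * v j : ℝ) : ℂ)) := by
    simp only [ctr]; push_cast; ring
  rw [e, norm_mul, norm_mul, hζ j, Complex.norm_I, Complex.norm_real, one_mul, one_mul, Real.norm_eq_abs,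
    abs_mul, abs_mul, hj, abs_of_pos hδ, mul_one] at a3
  have h4 : (1:ℝ) ≤ |(k:ℝ) - l| := by
    have : (1:ℤ) ≤ |(k:ℤ) - l| := Int.one_le_abs (by omega)
    exact_mod_cast this
  nlinarith

section
variable {φ : (Fin 2 → ℂ) → (Fin 2 → ℂ)}

lemma ctr_phi (hhol : DifferentiableOn ℂ φ (polydisc 2)) (hsm : ContDiffOn ℝ 2 φ (closedPolydisc 2))
    (hmap : ∀ z ∈ polydisc 2, φ z ∈ polydisc 2) {ζ : Fin 2 → ℂ} (hζ : ζ ∈ torus 2) (hη : φ ζ ∈ torus 2)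
    {v : Fin 2 → ℝ} (hv : ∀ i, ∑ j, jacEntry 2 φ ζ i j * (ζ j * v j) = 0) :
    ∃ C' : ℝ, 0 < C' ∧ ∀ (δ t : ℝ), 0 < δ → δ ≤ 1 / 9 → (∀ j, (t * v j) ^ 2 ≤ δ) →
      ∀ z ∈ bx (ctr ζ δ (fun j => t * v j)) (fun _ => δ / 4), ∀ i,
      ‖1 - conj (((1 - δ : ℝ) : ℂ) * φ ζ i) * φ z i‖ ≤ C' * δ := by
  have hζQ : ζ ∈ closedPolydisc 2 := fun j => (hζ j).le
  obtain ⟨K, hK, hq⟩ := quad_est hsm hζQ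
  set S : ℝ := ∑ i, ∑ j, ‖jacEntry 2 φ ζ i j‖ with hS
  have hS0 : 0 ≤ S := Finset.sum_nonneg fun i _ => Finset.sum_nonneg fun j _ => norm_nonneg _
  refine ⟨5 * S + 7 * K + 1, by positivity, fun δ t hδ hδ1 hs z hz i => ?_⟩
  have hzP := ctr_sub hζ hδ hδ1 hs hz
  obtain ⟨e, he, hze⟩ := ctr_repr hζ δ _ hz
  have hdiff : ∀ j, (z - ζ) j = ζ j * (-(4 * δ : ℂ) - Complex.I * ((t * v j : ℝ) : ℂ) + e j) := by
    intro j
    rw [Pi.sub_apply, hze j]; ring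
  have hn2 : ‖z - ζ‖ ^ 2 ≤ 7 * δ := by
    have : ‖z - ζ‖ ≤ Real.sqrt (7 * δ) := by
      rw [pi_norm_le_iff_of_nonneg (Real.sqrt_nonneg _)]
      intro j
      apply Real.le_sqrt_of_sq_le
      rw [hdiff, norm_mul, hζ j, one_mul]
      exact sq_dist_bound δ _ hδ hδ1 (hs j) (e j) (he j)
    calc ‖z - ζ‖ ^ 2 ≤ Real.sqrt (7 * δ) ^ 2 := by gcongr
      _ = _ := Real.sq_sqrt (by positivity)
  have hDi : ‖fderivWithin ℝ φ (closedPolydisc 2) ζ (z - ζ) i‖ ≤ 5 * S * δ := by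
    have e1 : fderivWithin ℝ φ (closedPolydisc 2) ζ (z - ζ) i =
        ∑ j, jacEntry 2 φ ζ i j * (ζ j * (-(4 * δ : ℂ) + e j)) := by
      rw [D_apply hhol hsm hζQ]
      have : ∑ j, jacEntry 2 φ ζ i j * (z - ζ) j = ∑ j, jacEntry 2 φ ζ i j * (ζ j * (-(4 * δ : ℂ) + e j))
          - Complex.I * t * ∑ j, jacEntry 2 φ ζ i j * (ζ j * v j) := by
        rw [Finset.mul_sum, ← Finset.sum_sub_distrib]
        refine Finset.sum_congr rfl (fun j _ => ?_)
        rw [hdiff]; push_cast; ring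
      rw [this, hv, mul_zero, sub_zero]
    rw [e1]
    refine (norm_sum_le _ _).trans ?_
    have h1 : ∀ j ∈ Finset.univ, ‖jacEntry 2 φ ζ i j * (ζ j * (-(4 * δ : ℂ) + e j))‖ ≤
        ‖jacEntry 2 φ ζ i j‖ * (5 * δ) := by
      intro j _
      rw [norm_mul, norm_mul, hζ j, one_mul]
      gcongr
      refine (norm_add_le _ _).trans ?_
      have c : ‖-(4 * δ : ℂ)‖ = 4 * δ := by simp [abs_of_pos hδ]
      rw [c]; linarith [he j]
    refine (Finset.sum_le_sum h1).trans ?_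
    rw [← Finset.sum_mul]
    have h2 : ∑ j, ‖jacEntry 2 φ ζ i j‖ ≤ S :=
      Finset.single_le_sum (f := fun i => ∑ j, ‖jacEntry 2 φ ζ i j‖)
        (fun i _ => Finset.sum_nonneg fun j _ => norm_nonneg _) (Finset.mem_univ i)
    nlinarith
  have hqz := (norm_le_pi_norm _ i).trans (hq z (subset_Q hzP))
  rw [Pi.sub_apply, Pi.sub_apply] at hqz
  have hφ : ‖φ z i - φ ζ i‖ ≤ (5 * S + 7 * K) * δ := by
    have := norm_sub_norm_le (φ z i - φ ζ i) (fderivWithin ℝ φ (closedPolydisc 2) ζ (z - ζ) i)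
    nlinarith [mul_le_mul_of_nonneg_left hn2 hK]
  have hu := conj_mul_unit (hη i)
  have e2 : 1 - conj (((1 - δ : ℝ) : ℂ) * φ ζ i) * φ z i =
      -(conj (φ ζ i) * (φ z i - φ ζ i)) + (δ : ℂ) * (conj (φ ζ i) * φ z i) := by
    rw [map_mul, Complex.conj_ofReal]
    push_cast
    linear_combination (-1 : ℂ) * hu
  rw [e2]
  refine (norm_add_le _ _).trans ?_
  rw [norm_neg, norm_mul, norm_mul, norm_mul, RCLike.norm_conj, hη i, one_mul, one_mul, Complex.norm_real,
    Real.norm_of_nonneg hδ.le]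
  have := (hmap z hzP i).le
  nlinarith

theorem necessity (hhol : DifferentiableOn ℂ φ (polydisc 2)) (hsm : ContDiffOn ℝ 2 φ (closedPolydisc 2))
    (hmap : ∀ z ∈ polydisc 2, φ z ∈ polydisc 2) (β : ℝ) (hβ : -1 < β) (hb : bddBergman 2 β φ)
    {ζ : Fin 2 → ℂ} (hζ : ζ ∈ torus 2) (hη : φ ζ ∈ torus 2) :
    Matrix.det (Matrix.of fun i j => jacEntry 2 φ ζ i j) ≠ 0 := by
  intro hdet
  obtain ⟨v, hv1, hv2, hv⟩ := kernel_vec hhol hsm hmap hζ hη hdet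
  obtain ⟨C, hC, hbd⟩ := hb
  obtain ⟨M, hM⟩ := exists_nat_ge (β + 2)
  obtain ⟨B, hB, hup⟩ := test_upper β hβ M hM
  obtain ⟨C', hC', hphi⟩ := ctr_phi hhol hsm hmap hζ hη hv
  set c1 := (β + 1) * min 1 ((10:ℝ) ^ β) / 16 with hc1
  have hc1p : 0 < c1 := by
    have : 0 < min 1 ((10:ℝ) ^ β) := lt_min one_pos (by positivity)
    have : 0 < β + 1 := by linarith
    positivity
  obtain ⟨n0, hn0⟩ := exists_nat_gt (C * B ^ 2 * (C' ^ (2 * M)) ^ 2 / c1 ^ 2)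
  set n : ℕ := n0 + 3 with hn
  have hnR : (3:ℝ) ≤ n := by rw [hn]; push_cast; linarith [(Nat.cast_nonneg n0 : (0:ℝ) ≤ n0)]
  have hn0n : (n0 : ℝ) ≤ n := by rw [hn]; push_cast; linarith
  set δ : ℝ := 1 / (n:ℝ) ^ 2 with hδdef
  have hδ : 0 < δ := by positivity
  have hδ1 : δ ≤ 1 / 9 := by
    rw [hδdef]
    apply one_div_le_one_div_of_le (by norm_num)
    nlinarith
  have hs : ∀ k ∈ Finset.range n, ∀ j, ((k:ℝ) * δ * v j) ^ 2 ≤ δ := by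
    intro k hk j
    have hkn : (k:ℝ) ≤ n := by exact_mod_cast (Finset.mem_range.mp hk).le
    have h1 : v j ^ 2 ≤ 1 := by rw [← sq_abs]; nlinarith [hv1 j, abs_nonneg (v j)]
    have h2 : (k:ℝ) ^ 2 ≤ (n:ℝ) ^ 2 := by gcongr
    have h3 : (n:ℝ) ^ 2 * δ = 1 := by rw [hδdef]; field_simp
    calc ((k:ℝ) * δ * v j) ^ 2 = (k:ℝ) ^ 2 * δ * δ * v j ^ 2 := by ring
      _ ≤ (n:ℝ) ^ 2 * δ * δ * 1 := by gcongr
      _ = δ := by rw [h3]; ring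
  set a : Fin 2 → ℂ := fun i => conj (((1 - δ : ℝ) : ℂ) * φ ζ i) with ha
  have hna : ∀ i, ‖a i‖ = 1 - δ := by
    intro i
    rw [ha]
    simp only
    rw [RCLike.norm_conj, norm_mul, hη i, Complex.norm_real, Real.norm_of_nonneg (by linarith), mul_one]
  have hne : ∀ w ∈ polydisc 2, ∀ i, 1 - a i * w i ≠ 0 := by
    intro w hw i h0
    have h1 : ‖a i * w i‖ = 1 := by rw [← sub_eq_zero.mp h0]; simp
    rw [norm_mul, hna] at h1
    nlinarith [hw i, norm_nonneg (w i)]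
  set f : (Fin 2 → ℂ) → ℂ := fun w => ((1 - a 0 * w 0) ^ M)⁻¹ * ((1 - a 1 * w 1) ^ M)⁻¹ with hf
  have hfd : DifferentiableOn ℂ f (polydisc 2) := by
    have hcoord : ∀ i : Fin 2, DifferentiableOn ℂ (fun w : Fin 2 → ℂ => ((1 - a i * w i) ^ M)⁻¹) (polydisc 2) := by
      intro i
      refine DifferentiableOn.inv (by fun_prop) ?_
      intro w hw
      exact pow_ne_zero _ (hne w hw i)
    exact (hcoord 0).mul (hcoord 1)
  have hfn : ∀ w, ‖f w‖ ^ 2 = ∏ i, (‖1 - a i * w i‖ ^ (2 * M))⁻¹ := by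
    intro w
    rw [Fin.prod_univ_two, hf]
    simp only [norm_mul, norm_inv, norm_pow]
    rw [mul_pow, inv_pow, inv_pow, ← pow_mul, ← pow_mul, mul_comm M 2]
  have h1 := hbd f hfd
  have h2 : ∫⁻ z, ENNReal.ofReal (‖f z‖ ^ 2) ∂(Vbeta 2 β) ≤
      ENNReal.ofReal ((B * (δ ^ (β + 2) * (δ ^ (2 * M))⁻¹)) ^ 2) := by
    simp_rw [hfn]
    exact hup δ hδ (by linarith) (φ ζ) hη
  set bk : ℕ → Set (Fin 2 → ℂ) := fun k => bx (ctr ζ δ (fun j => k * δ * v j)) (fun _ => δ / 4) with hbk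
  have hbkm : ∀ k, MeasurableSet (bk k) := fun k => (bx_open _ _).measurableSet
  set U := ⋃ k ∈ Finset.range n, bk k with hU
  have hUm : MeasurableSet U := Finset.measurableSet_biUnion _ (fun k _ => hbkm k)
  set X := δ ^ (β + 2) with hX
  have hXp : 0 < X := Real.rpow_pos_of_pos hδ _
  set Y := δ ^ (2 * M) with hY
  have hYp : 0 < Y := by positivity
  have hUV : ENNReal.ofReal (n * (c1 * X) ^ 2) ≤ Vbeta 2 β U := by
    rw [hU, measure_biUnion_finset (fun k _ l _ hkl => ctr_disj hζ hδ hv2 hkl) (fun k _ => hbkm k)]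
    have : ∑ k ∈ Finset.range n, ENNReal.ofReal ((c1 * X) ^ 2) ≤ ∑ k ∈ Finset.range n, Vbeta 2 β (bk k) :=
      Finset.sum_le_sum (fun k hk => ctr_meas β hβ hζ hδ hδ1 (hs k hk))
    refine le_trans (le_of_eq ?_) this
    rw [Finset.sum_const, Finset.card_range, nsmul_eq_mul, ENNReal.ofReal_mul (by positivity), ENNReal.ofReal_natCast]
  set L : ℝ := ((C' ^ (2 * M) * Y)⁻¹) ^ 2 with hL
  have hLp : 0 < L := by positivity
  have hlow : ∀ z ∈ U, ENNReal.ofReal L ≤ ENNReal.ofReal (‖f (φ z)‖ ^ 2) := by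
    intro z hz
    rw [hU] at hz
    simp only [mem_iUnion] at hz
    obtain ⟨k, hk, hzk⟩ := hz
    apply ENNReal.ofReal_le_ofReal
    rw [hfn]
    have e : L = ∏ _i : Fin 2, (C' ^ (2 * M) * Y)⁻¹ := by simp [hL]
    rw [e]
    refine Finset.prod_le_prod (fun i _ => by positivity) (fun i _ => ?_)
    have h3 := hphi δ (k * δ) hδ hδ1 (hs k hk) z hzk i
    have hzP := ctr_sub hζ hδ hδ1 (hs k hk) hzk
    have h4 : 0 < ‖1 - a i * φ z i‖ := norm_pos_iff.mpr (hne _ (hmap z hzP) i)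
    rw [hY, ← mul_pow]
    apply inv_anti₀ (by positivity)
    gcongr
  have h3 : ENNReal.ofReal L * Vbeta 2 β U ≤ ∫⁻ z, ENNReal.ofReal (‖f (φ z)‖ ^ 2) ∂(Vbeta 2 β) := by
    rw [← setLIntegral_const]
    exact (setLIntegral_mono' hUm hlow).trans (setLIntegral_le_lintegral _ _)
  have h4 : ENNReal.ofReal (L * (n * (c1 * X) ^ 2)) ≤ ENNReal.ofReal (C * (B * (X * Y⁻¹)) ^ 2) := by
    rw [ENNReal.ofReal_mul hLp.le, ENNReal.ofReal_mul hC.le]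
    exact (mul_le_mul' le_rfl hUV).trans (h3.trans (h1.trans (mul_le_mul' le_rfl h2)))
  rw [ENNReal.ofReal_le_ofReal_iff (by positivity)] at h4
  have h5 : (n:ℝ) * c1 ^ 2 ≤ C * B ^ 2 * (C' ^ (2 * M)) ^ 2 := by
    have hCM : 0 < C' ^ (2 * M) := by positivity
    set W := C' ^ (2 * M) with hW
    have e1 : L * (n * (c1 * X) ^ 2) = (n * c1 ^ 2) * ((X * Y⁻¹) ^ 2 * (W⁻¹) ^ 2) := by
      rw [hL, mul_inv]; ring
    have e2 : C * (B * (X * Y⁻¹)) ^ 2 = (C * B ^ 2 * W ^ 2) * ((X * Y⁻¹) ^ 2 * (W⁻¹) ^ 2) := by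
      field_simp
    rw [e1, e2] at h4
    exact le_of_mul_le_mul_right h4 (by positivity)
  rw [div_lt_iff₀ (by positivity)] at hn0
  have : (n0:ℝ) * c1 ^ 2 ≤ n * c1 ^ 2 := by gcongr
  linarith

end

theorem bidisc_bergman_criterion (φ : (Fin 2 → ℂ) → (Fin 2 → ℂ))
    (hhol : DifferentiableOn ℂ φ (polydisc 2))
    (hsm : ContDiffOn ℝ 2 φ (closedPolydisc 2))
    (hmap : ∀ z ∈ polydisc 2, φ z ∈ polydisc 2)
    (β : ℝ) (hβ : -1 < β) :
    bddBergman 2 β φ ↔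
      ∀ ζ ∈ torus 2, φ ζ ∈ torus 2 →
        Matrix.det (Matrix.of fun i j => jacEntry 2 φ ζ i j) ≠ 0 := by
  exact ⟨fun hb ζ hζ hη => necessity hhol hsm hmap β hβ hb hζ hη,
    fun hinv => sufficiency hhol hsm hmap β hβ hinv⟩

end
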